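/- arXiv:0710.5212 — 2 statements merged into one kernel-verified Lean document; each statement's English description precedes it below -/
import Mathlib

section
/- If A_f has a component isomorphic to the line (in the sense defined in the context), then f has a singular point: there exists z ∈ ℂ² with J(P,Q)(z) = 0. -/
noncomputable section

/-- The polynomial map `ℂ² → ℂ²` defined by a pair `(P,Q)` of polynomials in
`ℂ[x,y]` (variable `0` is `x`, variable `1` is `y`). -/
def polyMap (P Q : MvPolynomial (Fin 2) ℂ) (z : ℂ × ℂ) : ℂ × ℂ :=
  (MvPolynomial.eval (fun i : Fin 2 => if i = 0 then z.1 else z.2) P,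
   MvPolynomial.eval (fun i : Fin 2 => if i = 0 then z.1 else z.2) Q)

/-- The non-proper value set `A_f` of `f = (P,Q)`: the set of points `b ∈ ℂ²` for which
there is a sequence `z_j → ∞` with `f(z_j) → b`. -/
def nonProperSet (P Q : MvPolynomial (Fin 2) ℂ) : Set (ℂ × ℂ) :=
  {b | ∃ z : ℕ → ℂ × ℂ,
    Filter.Tendsto (fun j => ‖z j‖) Filter.atTop Filter.atTop ∧
    Filter.Tendsto (fun j => polyMap P Q (z j)) Filter.atTop (nhds b)}

/-- The polynomial curve `ℂ → ℂ²` defined by a pair of one-variable polynomials. -/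
def curveMap (γ₁ γ₂ : Polynomial ℂ) (s : ℂ) : ℂ × ℂ := (γ₁.eval s, γ₂.eval s)

/-- The Jacobian `J(P,Q) = P_x Q_y - P_y Q_x`. -/
def Jac (P Q : MvPolynomial (Fin 2) ℂ) : MvPolynomial (Fin 2) ℂ :=
  MvPolynomial.pderiv 0 P * MvPolynomial.pderiv 1 Q
    - MvPolynomial.pderiv 1 P * MvPolynomial.pderiv 0 Q

section AMS

open Polynomial

/-- A degree-like function on a field. -/
structure DegLike {F : Type} [Field F] (D : F → ℤ) : Prop where
  mul : ∀ x y : F, x ≠ 0 → y ≠ 0 → D (x * y) = D x + D y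
  add : ∀ x y : F, x ≠ 0 → y ≠ 0 → x + y ≠ 0 → D (x + y) ≤ max (D x) (D y)

namespace DegLike

variable {F : Type} [Field F] {D : F → ℤ} (hD : DegLike D)
include hD

lemma one : D 1 = 0 := by
  have := hD.mul 1 1 one_ne_zero one_ne_zero
  simp at this
  exact this

lemma neg (x : F) (hx : x ≠ 0) : D (-x) = D x := by
  have h1 := hD.mul (-1) (-1) (by simp) (by simp)
  have h2 := hD.one
  have h3 := hD.mul (-1) x (by simp) hx
  simp at h1 h3
  rw [h3]
  omega

lemma pow (x : F) (hx : x ≠ 0) (n : ℕ) : D (x ^ n) = n * D x := by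
  induction n with
  | zero => simp [hD.one]
  | succ n ih => rw [pow_succ, hD.mul _ _ (pow_ne_zero _ hx) hx, ih]; push_cast; ring

lemma add_lt (x y : F) (hx : x ≠ 0) (hy : y ≠ 0) (h : D x < D y) :
    x + y ≠ 0 ∧ D (x + y) = D y := by
  have h0 : x + y ≠ 0 := by
    intro h0
    have : x = -y := eq_neg_of_add_eq_zero_left h0
    rw [this, hD.neg y hy] at h
    omega
  refine ⟨h0, ?_⟩
  have h1 := hD.add x y hx hy h0
  have h2 := hD.add (x + y) (-x) h0 (neg_ne_zero.2 hx) (by simpa using hy)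
  rw [hD.neg x hx] at h2
  simp only [add_neg_cancel_comm] at h2
  omega

lemma add_ne (x y : F) (hx : x ≠ 0) (hy : y ≠ 0) (h : D x ≠ D y) :
    x + y ≠ 0 ∧ D (x + y) = max (D x) (D y) := by
  rcases lt_or_gt_of_ne h with h | h
  · obtain ⟨h1, h2⟩ := hD.add_lt x y hx hy h
    exact ⟨h1, by rw [h2, max_eq_right h.le]⟩
  · obtain ⟨h1, h2⟩ := hD.add_lt y x hy hx h
    rw [add_comm]
    exact ⟨h1, by rw [h2, max_eq_left h.le]⟩

end DegLike

section expansion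

variable {F : Type} [Field F] {D : F → ℤ} (hD : DegLike D)
  {A : Type} [CommRing A] [IsDomain A] (ev : A[X] →+* F) (G : A[X]) (hG : G.Monic)
  (e : ℕ) (he : G.natDegree = e) (hevG : ev G ≠ 0) (a : ℤ)
  (hst : ∀ p : A[X], p ≠ 0 → p.degree < e → ev p ≠ 0 ∧ a ∣ D (ev p))
  (r : ℕ) (hr : ∀ j : ℕ, 0 < j → j < r → ¬ a ∣ j * D (ev G))

include hG he in
lemma exp_split (J : ℕ) (p : A[X]) (hp : p.degree < ((J + 1) * e : ℕ)) :
    ∃ q s : A[X], p = q * G ^ J + s ∧ q.degree < e ∧ s.degree < (J * e : ℕ) := by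
  have hm : (G ^ J).Monic := hG.pow J
  have hdeg : (G ^ J).natDegree = J * e := by rw [hG.natDegree_pow, he]
  refine ⟨p /ₘ G ^ J, p %ₘ G ^ J, ?_, ?_, ?_⟩
  · conv_lhs => rw [← modByMonic_add_div p (G ^ J)]
    ring
  · by_cases h0 : p /ₘ G ^ J = 0
    · rw [h0, degree_zero]; exact WithBot.bot_lt_coe _
    · have hp0 : p ≠ 0 := by rintro rfl; simp at h0
      rw [← natDegree_lt_iff_degree_lt h0, natDegree_divByMonic _ hm, hdeg]
      rw [← natDegree_lt_iff_degree_lt hp0] at hp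
      have : (p /ₘ G ^ J) ≠ 0 := h0
      have h2 : J * e ≤ p.natDegree := by
        by_contra hlt
        apply h0
        rw [divByMonic_eq_zero_iff hm]
        apply degree_lt_degree
        omega
      have : (J + 1) * e = J * e + e := by ring
      omega
  · rw [← hdeg, ← degree_eq_natDegree hm.ne_zero]
    exact degree_modByMonic_lt p hm

include hD hG he hevG hst hr in
lemma exp_main (J : ℕ) (hJ : J ≤ r) (p : A[X]) (hp0 : p ≠ 0) (hp : p.degree < (J * e : ℕ)) :
    ev p ≠ 0 ∧ ∃ j < J, ∃ q : A[X], q ≠ 0 ∧ q.degree < e ∧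
      D (ev p) = D (ev q) + j * D (ev G) := by
  induction J generalizing p with
  | zero =>
    exfalso
    simp at hp
    exact hp0 hp
  | succ J ih =>
    obtain ⟨q, s, hpq, hq, hs⟩ := exp_split G hG e he J p hp
    have hGJ : ev (G ^ J) ≠ 0 := by rw [map_pow]; exact pow_ne_zero _ hevG
    by_cases hq0 : q = 0
    · have : p = s := by rw [hpq, hq0]; ring
      subst this
      obtain ⟨h1, j, hj, h2⟩ := ih (by omega) p hp0 hs
      exact ⟨h1, j, by omega, h2⟩
    · obtain ⟨hq1, hq2⟩ := hst q hq0 hq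
      have hqG : ev (q * G ^ J) ≠ 0 := by rw [map_mul]; exact mul_ne_zero hq1 hGJ
      have hDq : D (ev (q * G ^ J)) = D (ev q) + J * D (ev G) := by
        rw [map_mul, hD.mul _ _ hq1 hGJ, map_pow, hD.pow _ hevG]
      by_cases hs0 : s = 0
      · have : p = q * G ^ J := by rw [hpq, hs0]; ring
        subst this
        exact ⟨hqG, J, by omega, q, hq0, hq, hDq⟩
      · obtain ⟨hs1, j, hj, q', hq'0, hq', hDs⟩ := ih (by omega) s hs0 hs
        have hne : D (ev (q * G ^ J)) ≠ D (ev s) := by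
          rw [hDq, hDs]
          intro h
          apply hr (J - j) (by omega) (by omega)
          rw [Nat.cast_sub hj.le]
          have : ((J : ℤ) - j) * D (ev G) = D (ev q') - D (ev q) := by linarith
          rw [this]
          exact dvd_sub (hst q' hq'0 hq').2 hq2
        obtain ⟨h1, h2⟩ := hD.add_ne _ _ hqG hs1 hne
        rw [hpq, map_add]
        refine ⟨h1, ?_⟩
        rcases max_choice (D (ev (q * G ^ J))) (D (ev s)) with h | h
        · exact ⟨J, by omega, q, hq0, hq, by rw [h2, h, hDq]⟩
        · exact ⟨j, by omega, q', hq'0, hq', by rw [h2, h, hDs]⟩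

include hD hG he hevG hst hr in
lemma exp_top (J : ℕ) (hJ : J < r) (q s : A[X]) (hq0 : q ≠ 0) (hq : q.degree < e)
    (hs : s.degree < (J * e : ℕ)) :
    ev (q * G ^ J + s) ≠ 0 ∧ D (ev q) + J * D (ev G) ≤ D (ev (q * G ^ J + s)) := by
  have hGJ : ev (G ^ J) ≠ 0 := by rw [map_pow]; exact pow_ne_zero _ hevG
  obtain ⟨hq1, hq2⟩ := hst q hq0 hq
  have hqG : ev (q * G ^ J) ≠ 0 := by rw [map_mul]; exact mul_ne_zero hq1 hGJ
  have hDq : D (ev (q * G ^ J)) = D (ev q) + J * D (ev G) := by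
    rw [map_mul, hD.mul _ _ hq1 hGJ, map_pow, hD.pow _ hevG]
  by_cases hs0 : s = 0
  · subst hs0
    rw [add_zero]
    exact ⟨hqG, hDq.ge⟩
  · obtain ⟨hs1, j, hj, q', hq'0, hq', hDs⟩ :=
      exp_main hD ev G hG e he hevG a hst r hr J hJ.le s hs0 hs
    have hne : D (ev (q * G ^ J)) ≠ D (ev s) := by
      rw [hDq, hDs]
      intro h
      apply hr (J - j) (by omega) (by omega)
      rw [Nat.cast_sub hj.le]
      have : ((J : ℤ) - j) * D (ev G) = D (ev q') - D (ev q) := by linarith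
      rw [this]
      exact dvd_sub (hst q' hq'0 hq').2 hq2
    obtain ⟨h1, h2⟩ := hD.add_ne _ _ hqG hs1 hne
    rw [map_add]
    refine ⟨h1, ?_⟩
    rw [h2, ← hDq]
    exact le_max_left _ _

end expansion
section tsch

variable {A : Type} [CommRing A] [IsDomain A]

lemma tsch_binom (x y : A[X]) (e b : ℕ) (hx : x.natDegree ≤ e) (hy : y.natDegree ≤ b)
    (hbe : b ≤ e) (n : ℕ) :
    ((x + y) ^ (n + 2) - x ^ (n + 2) - (n + 2 : ℕ) * x ^ (n + 1) * y).natDegree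
      ≤ 2 * b + n * e := by
  induction n with
  | zero =>
    have : (x + y) ^ (0 + 2) - x ^ (0 + 2) - ((0 + 2 : ℕ) : A[X]) * x ^ (0 + 1) * y = y ^ 2 := by
      push_cast; ring
    rw [this]
    have := natDegree_pow_le_of_le 2 hy
    omega
  | succ n ih =>
    have : (x + y) ^ (n + 1 + 2) - x ^ (n + 1 + 2) - ((n + 1 + 2 : ℕ) : A[X]) * x ^ (n + 1 + 1) * y
       = (x + y) * ((x + y) ^ (n + 2) - x ^ (n + 2) - (n + 2 : ℕ) * x ^ (n + 1) * y)
         + (n + 2 : ℕ) * (x ^ (n + 1) * y ^ 2) := by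
      push_cast; ring
    rw [this]
    refine natDegree_add_le_of_degree_le ?_ ?_
    · have h1 : (x + y).natDegree ≤ e := natDegree_add_le_of_degree_le hx (hy.trans hbe)
      have := natDegree_mul_le_of_le h1 ih
      refine this.trans ?_
      linarith
    · have h1 := natDegree_mul_le_of_le (natDegree_pow_le_of_le (n + 1) hx)
        (natDegree_pow_le_of_le 2 hy)
      have h2 := natDegree_mul_le_of_le (natDegree_natCast (R := A) (n + 2)).le h1
      refine h2.trans ?_
      linarith

variable (r e : ℕ) (hr : 2 ≤ r) (u : A) (hu : (r : A) * u = 1)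
  (Gp : A[X]) (hGp : Gp.Monic) (hGpd : Gp.natDegree = r * e)

include hr hu in
lemma tsch_step (Ψ q s : A[X]) (hΨ : Ψ.Monic) (hΨd : Ψ.natDegree = e)
    (hW : Gp - Ψ ^ r = q * Ψ ^ (r - 1) + s) (hq0 : q ≠ 0) (hq : q.degree < e)
    (hs : s.degree < ((r - 1) * e : ℕ)) :
    (Ψ + C u * q).Monic ∧ (Ψ + C u * q).natDegree = e ∧
      (Gp - (Ψ + C u * q) ^ r).degree < (Gp - Ψ ^ r).degree := by
  have hu0 : u ≠ 0 := by rintro rfl; simp at hu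
  have hCq : (C u * q).degree < Ψ.degree := by
    rw [degree_C_mul hu0, degree_eq_natDegree hΨ.ne_zero, hΨd]; exact hq
  refine ⟨hΨ.add_of_left hCq, ?_, ?_⟩
  · rw [natDegree_add_eq_left_of_degree_lt hCq, hΨd]
  · obtain ⟨n, rfl⟩ : ∃ n, r = n + 2 := ⟨r - 2, by omega⟩
    have hqe : q.natDegree < e := by rwa [natDegree_lt_iff_degree_lt hq0]
    have hb := tsch_binom Ψ (C u * q) e q.natDegree hΨd.le (natDegree_C_mul_le _ _) hqe.le n
    set E := (Ψ + C u * q) ^ (n + 2) - Ψ ^ (n + 2) - (n + 2 : ℕ) * Ψ ^ (n + 1) * (C u * q) with hE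
    have hrw : Gp - (Ψ + C u * q) ^ (n + 2) = s - E := by
      have h1 : ((n + 2 : ℕ) : A[X]) * C u = 1 := by
        rw [← C_eq_natCast, ← C_mul, hu, C_1]
      have h2 : Gp = Ψ ^ (n + 2) + q * Ψ ^ (n + 1) + s := by
        have : n + 2 - 1 = n + 1 := by omega
        rw [this] at hW
        linear_combination hW
      rw [hE, h2]
      linear_combination (- Ψ ^ (n + 1) * q) * h1
    have hdqG : (q * Ψ ^ (n + 1)).degree = ((q.natDegree + (n + 1) * e : ℕ) : WithBot ℕ) := by
      have hm := hΨ.pow (n + 1)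
      have h0 : q * Ψ ^ (n + 1) ≠ 0 := mul_ne_zero hq0 hm.ne_zero
      rw [degree_eq_natDegree h0, natDegree_mul hq0 hm.ne_zero, hΨ.natDegree_pow, hΨd]
    have hs' : s.degree < (q * Ψ ^ (n + 1)).degree := by
      rw [hdqG]
      refine lt_of_lt_of_le hs ?_
      exact_mod_cast Nat.le_add_left _ _
    have hWd : (Gp - Ψ ^ (n + 2)).degree = ((q.natDegree + (n + 1) * e : ℕ) : WithBot ℕ) := by
      rw [hW, ← hdqG]
      exact degree_add_eq_left_of_degree_lt hs'
    rw [hrw, hWd]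
    refine lt_of_le_of_lt (degree_sub_le _ _) ?_
    rw [max_lt_iff]
    refine ⟨by rw [← hdqG]; exact hs', ?_⟩
    refine lt_of_le_of_lt (degree_le_natDegree) ?_
    have : (n + 1) * e = n * e + e := by ring
    exact_mod_cast (by omega : E.natDegree < q.natDegree + (n + 1) * e)

include hr hu hGp hGpd in
lemma tsch_exists (he : 0 < e) (Pred : A[X] → Prop)
    (hstep : ∀ Ψ q s : A[X], Ψ.Monic → Ψ.natDegree = e → Pred Ψ →
      Gp - Ψ ^ r = q * Ψ ^ (r - 1) + s → q ≠ 0 → q.degree < e →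
      s.degree < ((r - 1) * e : ℕ) → Pred (Ψ + C u * q))
    (Ψ : A[X]) (hΨ : Ψ.Monic) (hΨd : Ψ.natDegree = e) (hP : Pred Ψ) :
    ∃ Ψ' : A[X], Ψ'.Monic ∧ Ψ'.natDegree = e ∧ Pred Ψ' ∧
      (Gp - Ψ' ^ r).degree < ((r - 1) * e : ℕ) := by
  suffices H : ∀ n : WithBot ℕ, ∀ Ψ : A[X], (Gp - Ψ ^ r).degree = n → Ψ.Monic → Ψ.natDegree = e →
      Pred Ψ → ∃ Ψ' : A[X], Ψ'.Monic ∧ Ψ'.natDegree = e ∧ Pred Ψ' ∧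
      (Gp - Ψ' ^ r).degree < ((r - 1) * e : ℕ) from H _ Ψ rfl hΨ hΨd hP
  intro n
  induction n using WellFoundedLT.induction with
  | _ n ih =>
    intro Ψ hn hΨ hΨd hP
    have hdeg : (Gp - Ψ ^ r).degree < ((r - 1 + 1) * e : ℕ) := by
      have hm := hΨ.pow r
      have h1 : Gp.degree = (r * e : ℕ) := by rw [degree_eq_natDegree hGp.ne_zero, hGpd]
      have h2 : (Ψ ^ r).degree = (r * e : ℕ) := by
        rw [degree_eq_natDegree hm.ne_zero, hΨ.natDegree_pow, hΨd]
      have : r - 1 + 1 = r := by omega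
      rw [this, ← h1]
      exact degree_sub_lt_left (by rw [h1, h2]) hGp.ne_zero (by rw [hGp.leadingCoeff, hm.leadingCoeff])
    obtain ⟨q, s, hW, hq, hs⟩ := exp_split Ψ hΨ e hΨd (r - 1) _ hdeg
    by_cases hq0 : q = 0
    · refine ⟨Ψ, hΨ, hΨd, hP, ?_⟩
      rw [hW, hq0, zero_mul, zero_add]
      exact hs
    · obtain ⟨h1, h2, h3⟩ := tsch_step r e hr u hu Gp Ψ q s hΨ hΨd hW hq0 hq hs
      exact ih _ (hn ▸ h3) _ rfl h1 h2 (hstep Ψ q s hΨ hΨd hP hW hq0 hq hs)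

include hr in
lemma tsch_unique (hr0 : (r : A) ≠ 0) (Y Z : A[X]) (hY : Y.Monic) (hYd : Y.natDegree = e)
    (hZ : Z.Monic) (hZd : Z.natDegree = e)
    (h : (Y ^ r - Z ^ r).degree < ((r - 1) * e : ℕ)) : Y = Z := by
  by_contra hne
  have hsub : Y - Z ≠ 0 := sub_ne_zero.2 hne
  have hg := geom_sum₂_mul Y Z r
  set S := ∑ i ∈ Finset.range r, Y ^ i * Z ^ (r - 1 - i) with hS
  have hcoef : S.coeff ((r - 1) * e) = r := by
    rw [hS, finsetSum_coeff]
    rw [Finset.sum_congr rfl (g := fun _ => (1 : A))]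
    · simp
    · intro i hi
      rw [Finset.mem_range] at hi
      have hm : (Y ^ i * Z ^ (r - 1 - i)).Monic := (hY.pow i).mul (hZ.pow _)
      have hd : (Y ^ i * Z ^ (r - 1 - i)).natDegree = (r - 1) * e := by
        rw [(hY.pow i).natDegree_mul (hZ.pow _), hY.natDegree_pow, hZ.natDegree_pow, hYd, hZd,
          ← add_mul]
        congr 1
        omega
      rw [← hd]
      exact hm.coeff_natDegree
  have hSd : ((r - 1) * e : ℕ) ≤ S.degree := le_degree_of_ne_zero (by rw [hcoef]; exact hr0)
  rw [← hg, degree_mul] at h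
  have h0 : (0 : WithBot ℕ) ≤ (Y - Z).degree := zero_le_degree_iff.2 hsub
  have : S.degree ≤ S.degree + (Y - Z).degree := le_add_of_nonneg_right h0
  exact absurd (hSd.trans this) (not_le.2 h)

end tsch
lemma DegLike.sum_inj {F : Type} [Field F] {D : F → ℤ} (hD : DegLike D) {I : Type}
    (S : Finset I) (hS : S.Nonempty) (x : I → F) (hx : ∀ i ∈ S, x i ≠ 0)
    (hinj : ∀ i ∈ S, ∀ j ∈ S, D (x i) = D (x j) → i = j) :
    (∑ i ∈ S, x i) ≠ 0 ∧ ∃ i ∈ S, D (∑ i ∈ S, x i) = D (x i) := by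
  classical
  induction hS using Finset.Nonempty.cons_induction with
  | singleton a => simpa using hx a (by simp)
  | cons a s ha hs ih =>
    obtain ⟨h1, i, hi, h2⟩ := ih (fun i hi => hx i (Finset.mem_cons_of_mem hi))
      (fun i hi j hj => hinj i (Finset.mem_cons_of_mem hi) j (Finset.mem_cons_of_mem hj))
    have hne : D (x a) ≠ D (∑ i ∈ s, x i) := by
      rw [h2]
      intro h
      have := hinj a (Finset.mem_cons_self a s) i (Finset.mem_cons_of_mem hi) h
      exact ha (this ▸ hi)
    obtain ⟨h3, h4⟩ := hD.add_ne _ _ (hx a (Finset.mem_cons_self a s)) h1 hne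
    rw [Finset.sum_cons]
    refine ⟨h3, ?_⟩
    rcases max_choice (D (x a)) (D (∑ i ∈ s, x i)) with h | h
    · exact ⟨a, Finset.mem_cons_self a s, by rw [h4, h]⟩
    · exact ⟨i, Finset.mem_cons_of_mem hi, by rw [h4, h, h2]⟩

/-- The data of the Abhyankar–Moh–Suzuki argument. -/
structure AMSData (R K F : Type) [CommRing R] [IsDomain R] [Field K] [Field F] where
  D : F → ℤ
  hD : DegLike D
  ι : R →+* K
  hι : Function.Injective ι
  σ : K →+* F
  s : F
  hs : s ≠ 0
  hDs : D s = 1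
  φ : F
  m : ℕ
  hm : 0 < m
  hdiv : ∀ k : K, k ≠ 0 → (m : ℤ) ∣ D (σ k)
  hspan : ∀ i : ℕ, ∃ c : Fin m → K, φ ^ i = ∑ j, σ (c j) * s ^ (j : ℕ)
  δ : R[X]
  hδ : eval₂ σ φ (δ.map ι) = s
  h : R[X]
  hmon : h.Monic
  hdeg : h.natDegree = m
  hh : eval₂ σ φ (h.map ι) = 0
  hnn : ∀ p : R[X], eval₂ σ φ (p.map ι) ≠ 0 → 0 ≤ D (eval₂ σ φ (p.map ι))
  hunit : ∀ r : ℕ, r ≠ 0 → ∃ u : R, (r : R) * u = 1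

namespace AMSData

variable {R K F : Type} [CommRing R] [IsDomain R] [Field K] [Field F] (M : AMSData R K F)

/-- evaluation of polynomials over `K` at `φ` -/
noncomputable def evK : K[X] →+* F := eval₂RingHom M.σ M.φ

/-- evaluation of polynomials over `R` at `φ` -/
noncomputable def evR : R[X] →+* F := M.evK.comp (mapRingHom M.ι)

lemma evR_apply (p : R[X]) : M.evR p = M.evK (p.map M.ι) := rfl

/-- a stage of the semigroup construction -/
structure Stage (e a : ℕ) : Prop where
  mul : e * a = M.m
  ev : ∀ p : K[X], p ≠ 0 → p.degree < e → M.evK p ≠ 0 ∧ (a : ℤ) ∣ M.D (M.evK p)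

lemma stage_one : M.Stage 1 M.m where
  mul := by simp
  ev := by
    intro p hp hdeg
    have h1 : p.degree ≤ 0 := by
      rw [← natDegree_lt_iff_degree_lt hp] at hdeg
      rw [← natDegree_eq_zero_iff_degree_le_zero]; omega
    rw [eq_C_of_degree_le_zero h1] at hp ⊢
    have h2 : p.coeff 0 ≠ 0 := by simpa using hp
    have h3 : M.evK (C (p.coeff 0)) = M.σ (p.coeff 0) := by simp [evK]
    rw [h3]
    exact ⟨(_root_.map_ne_zero _).2 h2, M.hdiv _ h2⟩

variable {M} in
lemma Stage.evR {e a : ℕ} (hS : M.Stage e a) (p : R[X]) (hp : p ≠ 0) (hdeg : p.degree < e) :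
    M.evR p ≠ 0 ∧ (a : ℤ) ∣ M.D (M.evR p) := by
  rw [evR_apply]
  refine hS.ev _ ?_ ?_
  · rwa [Ne, Polynomial.map_eq_zero_iff M.hι]
  · rwa [degree_map_eq_of_injective M.hι]

lemma exists_psi {e a : ℕ} (hS : M.Stage e a) (ha : 1 < a) :
    ∃ Ψ : K[X], Ψ.Monic ∧ Ψ.natDegree = e ∧ M.evK Ψ ≠ 0 ∧ ¬ (a : ℤ) ∣ M.D (M.evK Ψ) := by
  classical
  have hmul := hS.mul
  choose c hc using M.hspan
  have hlt : ∀ x : Fin e × Fin (a - 1), x.1.1 * a + x.2.1 + 1 < M.m := by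
    rintro ⟨⟨i, hi⟩, ⟨b, hb⟩⟩
    rw [← hmul]
    calc i * a + b + 1 < (i + 1) * a := by rw [add_mul]; omega
      _ ≤ e * a := Nat.mul_le_mul_right _ hi
  let v : Fin (e + 1) ⊕ (Fin e × Fin (a - 1)) → (Fin M.m → K) :=
    Sum.elim (fun i => c i) (fun x => Pi.single ⟨_, hlt x⟩ 1)
  have hnl : ¬ LinearIndependent K v := by
    intro h
    have h1 := h.fintype_card_le_finrank
    simp only [Fintype.card_sum, Fintype.card_fin, Fintype.card_prod, Module.finrank_fin_fun] at h1
    rw [← hmul] at h1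
    obtain ⟨b, rfl⟩ : ∃ b, a = b + 1 := ⟨a - 1, by omega⟩
    simp only [Nat.add_sub_cancel] at h1
    rw [mul_add] at h1
    omega
  rw [Fintype.not_linearIndependent_iff] at hnl
  obtain ⟨g, hg, i0, hi0⟩ := hnl
  set p : K[X] := ∑ i : Fin (e + 1), C (g (Sum.inl i)) * X ^ (i : ℕ) with hp
  set y : Fin e × Fin (a - 1) → K := fun x => g (Sum.inr x) with hy
  have hpe : p.degree < (e + 1 : ℕ) := by
    refine lt_of_le_of_lt (degree_sum_le _ _) ?_
    rw [Finset.sup_lt_iff (WithBot.bot_lt_coe _)]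
    intro i _
    refine lt_of_le_of_lt (degree_C_mul_X_pow_le _ _) ?_
    exact_mod_cast i.2
  have hcoef : ∀ i : Fin (e + 1), p.coeff i = g (Sum.inl i) := by
    intro i
    rw [hp, finsetSum_coeff]
    simp only [coeff_C_mul, coeff_X_pow]
    rw [Finset.sum_eq_single i]
    · simp
    · intro j _ hj
      have : (i : ℕ) ≠ j := fun h => hj (Fin.ext h.symm)
      simp [this]
    · simp
  have hrel : M.evK p + ∑ x, M.σ (y x) * M.s ^ (x.1.1 * a + x.2.1 + 1) = 0 := by
    have h1 : ∀ j, ∑ i : Fin (e + 1), g (Sum.inl i) * c i j + ∑ x, y x *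
        (Pi.single (M := fun _ => K) (⟨_, hlt x⟩ : Fin M.m) (1 : K) : Fin M.m → K) j = 0 := by
      intro j
      have := congrFun hg j
      rw [Fintype.sum_sum_type] at this
      simpa [v] using this
    have h2 : M.evK p = ∑ j, M.σ (∑ i : Fin (e + 1), g (Sum.inl i) * c i j) * M.s ^ (j : ℕ) := by
      simp only [hp, map_sum, map_mul, Finset.sum_mul]
      rw [Finset.sum_comm]
      refine Finset.sum_congr rfl fun i _ => ?_
      have : M.evK (X ^ (i : ℕ)) = M.φ ^ (i : ℕ) := by simp [evK]
      rw [this, hc, Finset.mul_sum]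
      refine Finset.sum_congr rfl fun j _ => ?_
      simp [evK, mul_assoc]
    have h3 : ∑ x, M.σ (y x) * M.s ^ (x.1.1 * a + x.2.1 + 1) =
        ∑ j, M.σ (∑ x, y x *
        (Pi.single (M := fun _ => K) (⟨_, hlt x⟩ : Fin M.m) (1 : K) : Fin M.m → K) j)
          * M.s ^ (j : ℕ) := by
      simp only [map_sum, map_mul, Finset.sum_mul]
      rw [Finset.sum_comm]
      refine Finset.sum_congr rfl fun x _ => ?_
      rw [Finset.sum_eq_single (⟨_, hlt x⟩ : Fin M.m)]
      · simp
      · intro j _ hj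
        rw [Pi.single_eq_of_ne hj]; simp
      · simp
    rw [h2, h3, ← Finset.sum_add_distrib]
    refine Finset.sum_eq_zero fun j _ => ?_
    rw [← add_mul, ← map_add, h1 j, map_zero, zero_mul]
  -- key facts about `p`
  have hfull : p ≠ 0 → ¬ p.degree < e → p.natDegree = e := by
    intro hp0 h
    rw [← natDegree_lt_iff_degree_lt hp0] at h hpe
    omega
  have hpsi : ∀ hp0 : p ≠ 0, p.natDegree = e →
      (C p.leadingCoeff⁻¹ * p).Monic ∧ (C p.leadingCoeff⁻¹ * p).natDegree = e := by
    intro hp0 hpd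
    refine ⟨?_, ?_⟩
    · have := monic_mul_leadingCoeff_inv hp0
      rwa [mul_comm] at this
    · rw [natDegree_C_mul (inv_ne_zero (leadingCoeff_ne_zero.2 hp0)), hpd]
  have hev : M.evK (C p.leadingCoeff⁻¹ * p) = M.σ p.leadingCoeff⁻¹ * M.evK p := by
    rw [map_mul]; simp [evK]
  by_cases hy0 : ∀ x, y x = 0
  · exfalso
    have hev0 : M.evK p = 0 := by
      simpa [hy0] using hrel
    have hp0 : p ≠ 0 := by
      rintro h
      apply hi0
      rcases i0 with i | x
      · rw [← hcoef, h, coeff_zero]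
      · exact hy0 x
    have hpd := hfull hp0 (fun h => (hS.ev p hp0 h).1 hev0)
    obtain ⟨hmon, hdeg⟩ := hpsi hp0 hpd
    set Ψ := C p.leadingCoeff⁻¹ * p
    have h0 : M.evK Ψ = 0 := by rw [hev, hev0, mul_zero]
    have h1 : M.evK ((M.δ.map M.ι) %ₘ Ψ) = M.s := by
      have := congrArg M.evK (modByMonic_add_div (M.δ.map M.ι) Ψ)
      rw [map_add, map_mul, h0, zero_mul, add_zero] at this
      rw [this]
      exact M.hδ
    have h2 := hS.ev ((M.δ.map M.ι) %ₘ Ψ) (by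
        intro h; rw [h, map_zero] at h1; exact M.hs h1.symm)
      (by rw [← hdeg, ← degree_eq_natDegree hmon.ne_zero]; exact degree_modByMonic_lt _ hmon)
    rw [h1, M.hDs] at h2
    have := Int.le_of_dvd one_pos h2.2
    omega
  · push Not at hy0
    obtain ⟨x0, hx0⟩ := hy0
    have hDx : ∀ x, y x ≠ 0 → ∃ k : ℤ, M.D (M.σ (y x) * M.s ^ (x.1.1 * a + x.2.1 + 1)) =
        M.m * k + (x.1.1 * a + x.2.1 + 1 : ℕ) := by
      intro x hx
      obtain ⟨k, hk⟩ := M.hdiv _ hx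
      refine ⟨k, ?_⟩
      rw [M.hD.mul _ _ ((_root_.map_ne_zero _).2 hx) (pow_ne_zero _ M.hs), M.hD.pow _ M.hs, M.hDs, hk,
        mul_one]
    obtain ⟨h1, x1, hx1, h2⟩ := M.hD.sum_inj (Finset.univ.filter fun x => y x ≠ 0)
      ⟨x0, by simpa using hx0⟩ (fun x => M.σ (y x) * M.s ^ (x.1.1 * a + x.2.1 + 1))
      (by
        intro x hx
        exact mul_ne_zero ((_root_.map_ne_zero _).2 (by simpa using hx)) (pow_ne_zero _ M.hs))
      (by
        intro x hx x' hx' h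
        obtain ⟨k, hk⟩ := hDx x (by simpa using hx)
        obtain ⟨k', hk'⟩ := hDx x' (by simpa using hx')
        simp only [hk, hk'] at h
        have h3 := hlt x
        have h4 := hlt x'
        have h5 : x.1.1 * a + x.2.1 + 1 = x'.1.1 * a + x'.2.1 + 1 := by
          have := congrArg (· % (M.m : ℤ)) h
          simp only [Int.mul_add_emod_self_left] at this
          rw [Int.emod_eq_of_lt (by positivity) (by exact_mod_cast h3),
            Int.emod_eq_of_lt (by positivity) (by exact_mod_cast h4)] at this
          exact_mod_cast this
        have h6 : a * x.1.1 + x.2.1 = a * x'.1.1 + x'.2.1 := by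
          rw [mul_comm a, mul_comm a]; omega
        have hb := x.2.2
        have hb' := x'.2.2
        have h7 : x.2.1 = x'.2.1 := by
          have := congrArg (· % a) h6
          simp only [Nat.mul_add_mod] at this
          rwa [Nat.mod_eq_of_lt (by omega), Nat.mod_eq_of_lt (by omega)] at this
        have h8 : x.1.1 = x'.1.1 := by
          rw [h7] at h6
          exact Nat.eq_of_mul_eq_mul_left (by omega) (Nat.add_right_cancel h6)
        exact Prod.ext (Fin.ext h8) (Fin.ext h7))
    have hsum : ∑ x ∈ Finset.univ.filter (fun x => y x ≠ 0),
        M.σ (y x) * M.s ^ (x.1.1 * a + x.2.1 + 1) =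
        ∑ x, M.σ (y x) * M.s ^ (x.1.1 * a + x.2.1 + 1) := by
      apply Finset.sum_filter_of_ne
      intro x _ h hx
      rw [hx] at h
      simp at h
    rw [hsum] at h1 h2
    have hevp : M.evK p = - ∑ x, M.σ (y x) * M.s ^ (x.1.1 * a + x.2.1 + 1) :=
      eq_neg_of_add_eq_zero_left hrel
    have hne : M.evK p ≠ 0 := by rw [hevp]; exact neg_ne_zero.2 h1
    have hnd : ¬ (a : ℤ) ∣ M.D (M.evK p) := by
      rw [hevp, M.hD.neg _ h1, h2]
      obtain ⟨k, hk⟩ := hDx x1 (by simpa using hx1)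
      rw [hk, ← hmul]
      intro h
      have h3 : (a : ℤ) ∣ (x1.2.1 + 1 : ℕ) := by
        have : ((x1.2.1 + 1 : ℕ) : ℤ) = (((e * a : ℕ) : ℤ) * k + (x1.1.1 * a + x1.2.1 + 1 : ℕ))
          - a * (e * k + x1.1.1) := by push_cast; ring
        rw [this]
        exact dvd_sub h (dvd_mul_right _ _)
      rw [Int.natCast_dvd_natCast] at h3
      have := Nat.le_of_dvd (by omega) h3
      have := x1.2.2
      omega
    have hp0 : p ≠ 0 := by rintro h; rw [h, map_zero] at hne; exact hne rfl
    have hpd := hfull hp0 (fun h => hnd (hS.ev p hp0 h).2)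
    obtain ⟨hmon, hdeg⟩ := hpsi hp0 hpd
    have hl : p.leadingCoeff⁻¹ ≠ 0 := inv_ne_zero (leadingCoeff_ne_zero.2 hp0)
    have hsl : M.σ p.leadingCoeff⁻¹ ≠ 0 := (_root_.map_ne_zero _).2 hl
    refine ⟨_, hmon, hdeg, ?_, ?_⟩
    · rw [hev]; exact mul_ne_zero hsl hne
    · rw [hev, M.hD.mul _ _ hsl hne]
      intro h
      apply hnd
      have h3 : (a : ℤ) ∣ M.D (M.σ p.leadingCoeff⁻¹) := by
        refine dvd_trans ?_ (M.hdiv _ hl)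
        rw [← hmul]
        push_cast
        exact dvd_mul_left _ _
      exact (dvd_add_right h3).1 h

lemma D_unit (r : ℕ) (hr : r ≠ 0) (u : R) (hu : (r : R) * u = 1) :
    M.σ (M.ι u) ≠ 0 ∧ M.D (M.σ (M.ι u)) = 0 := by
  have h1 : M.σ (M.ι r) * M.σ (M.ι u) = 1 := by
    rw [← map_mul, ← map_mul, hu, map_one, map_one]
  have hu0 : M.σ (M.ι u) ≠ 0 := right_ne_zero_of_mul_eq_one h1
  have hr0 : M.σ (M.ι r) ≠ 0 := left_ne_zero_of_mul_eq_one h1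
  refine ⟨hu0, ?_⟩
  have h2 := M.hD.mul _ _ hr0 hu0
  rw [h1, M.hD.one] at h2
  have h3 := M.hnn (C u) (by simpa using hu0)
  have h4 := M.hnn (C (r : R)) (by rw [map_C, eval₂_C]; exact hr0)
  rw [map_C, eval₂_C] at h3 h4
  omega

/-- The downward statement. -/
def Down (e a : ℕ) : Prop :=
  (∃ p : R[X], p.degree < e ∧ M.evR p ≠ 0 ∧ M.D (M.evR p) = a) ∧
  ∃ G : R[X], G.Monic ∧ G.natDegree = e ∧ ((M.evR G = 0 ∧ a = 1) ∨
    (M.evR G ≠ 0 ∧ ¬ (a : ℤ) ∣ M.D (M.evR G) ∧ M.D (M.evR G) < a))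

lemma down_one (e : ℕ) (hS : M.Stage e 1) : M.Down e 1 := by
  have he : e = M.m := by have := hS.mul; omega
  subst he
  have h0 : M.evR M.h = 0 := M.hh
  refine ⟨⟨M.δ %ₘ M.h, ?_, ?_⟩, M.h, M.hmon, M.hdeg, Or.inl ⟨h0, rfl⟩⟩
  · rw [← M.hdeg, ← degree_eq_natDegree M.hmon.ne_zero]; exact degree_modByMonic_lt _ M.hmon
  · have h1 : M.evR (M.δ %ₘ M.h) = M.s := by
      have := congrArg M.evR (modByMonic_add_div M.δ M.h)
      rw [map_add, map_mul, h0, zero_mul, add_zero] at this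
      rw [this]
      exact M.hδ
    rw [h1]
    exact ⟨M.hs, by rw [M.hDs]; simp⟩

lemma down_all (a : ℕ) : ∀ e : ℕ, M.Stage e a → M.Down e a := by
  induction a using Nat.strong_induction_on with
  | _ a ih =>
  intro e hS
  have hmul := hS.mul
  have hmpos := M.hm
  have ha0 : 0 < a := Nat.pos_of_ne_zero (by rintro rfl; omega)
  have he0 : 0 < e := Nat.pos_of_ne_zero (by rintro rfl; omega)
  rcases Nat.lt_or_ge 1 a with ha | ha
  swap
  · obtain rfl : a = 1 := by omega
    exact M.down_one e hS
  obtain ⟨Ψ, hΨm, hΨd, hΨ0, hΨa⟩ := M.exists_psi hS ha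
  set d : ℤ := M.D (M.evK Ψ) with hd
  set g : ℕ := Int.gcd a d with hg
  have hga : g ∣ a := by
    have := Int.gcd_dvd_left (a : ℤ) d
    exact_mod_cast this
  have hgd : (g : ℤ) ∣ d := Int.gcd_dvd_right _ _
  obtain ⟨r, hr⟩ := hga
  have hg0 : 0 < g := Nat.pos_of_ne_zero (by rintro h; rw [h] at hr; omega)
  have hr2 : 2 ≤ r := by
    by_contra h
    have : r = 0 ∨ r = 1 := by omega
    rcases this with rfl | rfl
    · omega
    · rw [mul_one] at hr
      rw [← hr] at hgd
      exact hΨa hgd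
  have hglt : g < a := by rw [hr]; nlinarith
  have hjr : ∀ j : ℕ, 0 < j → j < r → ¬ (a : ℤ) ∣ j * d := by
    intro j hj hjr h
    obtain ⟨d', hd'⟩ := hgd
    have hcop : Int.gcd r d' = 1 := by
      have h1 : Int.gcd ((g : ℤ) * r) (g * d') = g := by
        rw [← hd']
        have : ((g : ℤ) * r) = a := by rw [hr]; push_cast; ring
        rw [this]
      rw [Int.gcd_mul_left] at h1
      rw [Int.natAbs_natCast] at h1
      exact Nat.eq_of_mul_eq_mul_left hg0 (h1.trans (mul_one g).symm)
    have h2 : (r : ℤ) ∣ j * d' := by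
      have : ((g : ℤ) * r) ∣ g * (j * d') := by
        have h3 : ((g : ℤ) * r) = a := by rw [hr]; push_cast; ring
        rw [h3]
        have h4 : (g : ℤ) * (j * d') = j * d := by rw [hd']; ring
        rw [h4]; exact h
      exact (mul_dvd_mul_iff_left (by exact_mod_cast hg0.ne')).1 this
    have h3 : (r : ℤ) ∣ j := Int.dvd_of_dvd_mul_left_of_gcd_one h2 hcop
    rw [Int.natCast_dvd_natCast] at h3
    have := Nat.le_of_dvd hj h3
    omega
  have hSn : M.Stage (r * e) g := by
    refine ⟨by rw [← hmul, hr]; ring, ?_⟩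
    intro p hp0 hp
    obtain ⟨h1, j, hj, q, hq0, hq, h2⟩ :=
      exp_main M.hD M.evK Ψ hΨm e hΨd hΨ0 a hS.ev r hjr r le_rfl p hp0 hp
    refine ⟨h1, ?_⟩
    rw [h2]
    refine dvd_add (dvd_trans ?_ (hS.ev q hq0 hq).2) (Dvd.dvd.mul_left hgd _)
    rw [hr]; push_cast; exact dvd_mul_right _ _
  obtain ⟨⟨pp, hppd, hpp0, hppD⟩, Gp, hGpm, hGpd, hGp⟩ := ih g hglt (r * e) hSn
  obtain ⟨u, hu⟩ := M.hunit r (by omega)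
  obtain ⟨hu0, huD⟩ := M.D_unit r (by omega) u hu
  have huK : (r : K) * M.ι u = 1 := by
    have := congrArg M.ι hu
    simpa using this
  have hrR : (r : R) ≠ 0 := left_ne_zero_of_mul_eq_one hu
  have hrK : (r : K) ≠ 0 := left_ne_zero_of_mul_eq_one huK
  have hGkm : (Gp.map M.ι).Monic := hGpm.map _
  have hGkd : (Gp.map M.ι).natDegree = r * e := by
    rw [natDegree_map_eq_of_injective M.hι, hGpd]
  -- approximate root over K
  obtain ⟨Ψ', hΨ'm, hΨ'd, ⟨hΨ'0, hΨ'D⟩, hΨ'r⟩ := tsch_exists r e hr2 (M.ι u) huK (Gp.map M.ι)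
    hGkm hGkd he0 (fun Θ => M.evK Θ ≠ 0 ∧ M.D (M.evK Θ) = d) (by
      rintro Θ q s hΘ hΘd ⟨hΘ0, hΘD⟩ hW hq0 hq hs
      have hjr' : ∀ j : ℕ, 0 < j → j < r → ¬ (a : ℤ) ∣ j * M.D (M.evK Θ) := by
        rw [hΘD]; exact hjr
      obtain ⟨h1, h2⟩ := exp_top M.hD M.evK Θ hΘ e hΘd hΘ0 a hS.ev r hjr' (r - 1) (by omega)
        q s hq0 hq hs
      rw [← hW] at h1 h2
      have hW0 : Gp.map M.ι - Θ ^ r ≠ 0 := by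
        intro h; rw [h, map_zero] at h1; exact h1 rfl
      have hWd : (Gp.map M.ι - Θ ^ r).degree < (r * e : ℕ) := by
        have hm := hΘ.pow r
        have e1 : (Gp.map M.ι).degree = (r * e : ℕ) := by
          rw [degree_eq_natDegree hGkm.ne_zero, hGkd]
        have e2 : (Θ ^ r).degree = (r * e : ℕ) := by
          rw [degree_eq_natDegree hm.ne_zero, hΘ.natDegree_pow, hΘd]
        rw [← e1]
        exact degree_sub_lt_left (by rw [e1, e2]) hGkm.ne_zero
          (by rw [hGkm.leadingCoeff, hm.leadingCoeff])
      have hWg := (hSn.ev _ hW0 hWd).2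
      have hΘr0 : M.evK (Θ ^ r) ≠ 0 := by rw [map_pow]; exact pow_ne_zero _ hΘ0
      have hΘrD : M.D (M.evK (Θ ^ r)) = r * d := by rw [map_pow, M.hD.pow _ hΘ0, hΘD]
      have hsum : M.evK (Gp.map M.ι - Θ ^ r) + M.evK (Θ ^ r) = M.evR Gp := by
        rw [← map_add, sub_add_cancel]; rfl
      have hDW : M.D (M.evK (Gp.map M.ι - Θ ^ r)) = r * d := by
        by_contra hne
        rw [← hΘrD] at hne
        obtain ⟨h3, h4⟩ := M.hD.add_ne _ _ h1 hΘr0 hne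
        rw [hsum] at h3 h4
        rcases hGp with hGp | hGp
        · exact h3 hGp.1
        · apply hGp.2.1
          rw [h4]
          rcases max_choice (M.D (M.evK (Gp.map M.ι - Θ ^ r))) (M.D (M.evK (Θ ^ r))) with h | h
          · rw [h]; exact hWg
          · rw [h, hΘrD]; exact Dvd.dvd.mul_left hgd _
      rw [hDW, hΘD] at h2
      obtain ⟨hq1, hq2⟩ := hS.ev q hq0 hq
      have hqd : M.D (M.evK q) < d := by
        have h5 : M.D (M.evK q) ≤ d := by
          have : ((r - 1 : ℕ) : ℤ) = r - 1 := by
            rw [Nat.cast_sub (by omega)]; simp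
          rw [this] at h2
          linarith
        refine lt_of_le_of_ne h5 ?_
        intro h
        rw [h] at hq2
        exact hΨa hq2
      have hev : M.evK (C (M.ι u) * q) = M.σ (M.ι u) * M.evK q := by
        rw [map_mul]; simp [evK]
      have hev0 : M.evK (C (M.ι u) * q) ≠ 0 := by rw [hev]; exact mul_ne_zero hu0 hq1
      have hevD : M.D (M.evK (C (M.ι u) * q)) < M.D (M.evK Θ) := by
        rw [hev, M.hD.mul _ _ hu0 hq1, huD, zero_add, hΘD]; exact hqd
      obtain ⟨h6, h7⟩ := M.hD.add_lt _ _ hev0 hΘ0 hevD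
      rw [map_add, add_comm]
      exact ⟨h6, by rw [h7, hΘD]⟩) Ψ hΨm hΨd ⟨hΨ0, rfl⟩
  -- approximate root over R
  obtain ⟨G, hGm, hGd, -, hGr⟩ := tsch_exists r e hr2 u hu Gp hGpm hGpd he0 (fun _ => True)
    (by intros; trivial) (X ^ e) (monic_X_pow e) (natDegree_X_pow e) trivial
  have hGΨ : Ψ' = G.map M.ι := by
    refine tsch_unique r e hr2 hrK Ψ' (G.map M.ι) hΨ'm hΨ'd (hGm.map _)
      (by rw [natDegree_map_eq_of_injective M.hι, hGd]) ?_
    have h1 : Ψ' ^ r - (G.map M.ι) ^ r =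
        (Gp - G ^ r).map M.ι - (Gp.map M.ι - Ψ' ^ r) := by
      rw [Polynomial.map_sub, Polynomial.map_pow]; ring
    rw [h1]
    refine lt_of_le_of_lt (degree_sub_le _ _) (max_lt ?_ hΨ'r)
    rwa [degree_map_eq_of_injective M.hι]
  have hG0 : M.evR G ≠ 0 := by rw [evR_apply, ← hGΨ]; exact hΨ'0
  have hGD : M.D (M.evR G) = d := by rw [evR_apply, ← hGΨ]; exact hΨ'D
  have hdpos : 0 < d := by
    have h1 : 0 ≤ d := by rw [← hGD]; exact M.hnn G hG0
    refine lt_of_le_of_ne h1 ?_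
    intro h; rw [← h] at hΨa; exact hΨa (dvd_zero _)
  have hjrR : ∀ j : ℕ, 0 < j → j < r → ¬ (a : ℤ) ∣ j * M.D (M.evR G) := by
    rw [hGD]; exact hjr
  have hdg : d = g := by
    have hpp0' : pp ≠ 0 := by intro h; rw [h, map_zero] at hpp0; exact hpp0 rfl
    obtain ⟨-, j, hj, q, hq0, hq, h2⟩ :=
      exp_main M.hD M.evR G hGm e hGd hG0 a hS.evR r hjrR r le_rfl pp hpp0' hppd
    obtain ⟨hq1, hq2⟩ := hS.evR q hq0 hq
    have hq3 : 0 ≤ M.D (M.evR q) := M.hnn q hq1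
    rw [hppD, hGD] at h2
    have hj0 : j ≠ 0 := by
      rintro rfl
      simp at h2
      rw [← h2] at hq2
      have := Int.le_of_dvd (by exact_mod_cast hg0) hq2
      omega
    have hj1 : (1 : ℤ) ≤ j := by exact_mod_cast Nat.pos_of_ne_zero hj0
    have h3 : d ≤ g := by nlinarith
    exact le_antisymm h3 (Int.le_of_dvd hdpos hgd)
  refine ⟨?_, G, hGm, hGd, Or.inr ⟨hG0, by rw [hGD]; exact hΨa, by rw [hGD, hdg]; exact_mod_cast hglt⟩⟩
  have hGrD : M.D (M.evR (G ^ r)) = a := by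
    rw [map_pow, M.hD.pow _ hG0, hGD, hdg, hr]; push_cast; ring
  have hGr0 : M.evR (G ^ r) ≠ 0 := by rw [map_pow]; exact pow_ne_zero _ hG0
  have hE : M.evR (Gp - G ^ r) ≠ 0 ∧ M.D (M.evR (Gp - G ^ r)) = a := by
    rw [map_sub, sub_eq_add_neg]
    rcases hGp with ⟨hGp, -⟩ | ⟨hGp, -, hGp2⟩
    · rw [hGp, zero_add, M.hD.neg _ hGr0]
      exact ⟨neg_ne_zero.2 hGr0, hGrD⟩
    · have := M.hD.add_lt (M.evR Gp) (- M.evR (G ^ r)) hGp (neg_ne_zero.2 hGr0)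
        (by rw [M.hD.neg _ hGr0, hGrD]; have : (g : ℤ) < a := by exact_mod_cast hglt
            omega)
      rw [M.hD.neg _ hGr0, hGrD] at this
      exact this
  have hEne : Gp - G ^ r ≠ 0 := by intro h; rw [h, map_zero] at hE; exact hE.1 rfl
  obtain ⟨-, j, hj, q, hq0, hq, h2⟩ :=
    exp_main M.hD M.evR G hGm e hGd hG0 a hS.evR r hjrR (r - 1) (by omega) _ hEne hGr
  obtain ⟨hq1, hq2⟩ := hS.evR q hq0 hq
  refine ⟨q, hq, hq1, ?_⟩
  rw [hE.2] at h2
  have hj0 : j = 0 := by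
    by_contra hj0
    apply hjrR j (Nat.pos_of_ne_zero hj0) (by omega)
    have : (j : ℤ) * M.D (M.evR G) = a - M.D (M.evR q) := by linarith
    rw [this]
    exact dvd_sub dvd_rfl hq2
  subst hj0
  simp at h2
  exact h2.symm

theorem main : ∃ c : R, M.φ - M.σ (M.ι c) = 0 ∨ M.D (M.φ - M.σ (M.ι c)) < M.m := by
  obtain ⟨-, G, hGm, hGd, hG⟩ := M.down_all M.m 1 M.stage_one
  have h1 : G = X + C (G.coeff 0) := hGm.eq_X_add_C hGd
  have h2 : M.evR G = M.φ - M.σ (M.ι (- G.coeff 0)) := by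
    conv_lhs => rw [h1]
    rw [evR_apply]
    simp [evK]
  refine ⟨- G.coeff 0, ?_⟩
  rw [← h2]
  rcases hG with hG | hG
  · exact Or.inl hG.1
  · exact Or.inr hG.2.2

end AMSData
lemma comp_span (γ : ℂ[X]) (hγ : 0 < γ.natDegree) (b : ℂ[X]) :
    ∃ c : Fin γ.natDegree → ℂ[X], b = ∑ j, (c j).comp γ * X ^ (j : ℕ) := by
  induction hn : b.natDegree using Nat.strong_induction_on generalizing b with
  | _ n ih =>
  have hsmall : ∀ b : ℂ[X], b.degree < γ.degree → b = ∑ j : Fin γ.natDegree, C (b.coeff j) * X ^ (j : ℕ) := by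
    intro b hb
    have hγ0 : γ ≠ 0 := by rintro rfl; simp at hγ
    rw [degree_eq_natDegree hγ0] at hb
    conv_lhs => rw [b.as_sum_range' γ.natDegree (by
      by_cases h : b = 0
      · rw [h]; simpa using hγ
      · rwa [natDegree_lt_iff_degree_lt h])]
    rw [Finset.sum_range]
    simp [C_mul_X_pow_eq_monomial]
  have hγ0 : γ ≠ 0 := by rintro rfl; simp at hγ
  by_cases hlt : b.degree < γ.degree
  · refine ⟨fun j => C (b.coeff j), ?_⟩
    simpa using hsmall b hlt
  · have hr : (b % γ).degree < γ.degree := EuclideanDomain.mod_lt b hγ0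
    have hq : (b / γ).natDegree < n := by
      have h3 : (b / γ).degree < b.degree := degree_div_lt (by
        rintro rfl; exact hlt (by rw [degree_zero]; exact bot_lt_iff_ne_bot.2 (by simpa using hγ0)))
        (by rwa [← natDegree_pos_iff_degree_pos])
      rw [← hn]
      by_cases h4 : b / γ = 0
      · rw [h4, natDegree_zero]
        have : γ.natDegree ≤ b.natDegree := natDegree_le_natDegree (not_lt.1 hlt)
        omega
      exact natDegree_lt_natDegree h4 h3
    obtain ⟨c, hc⟩ := ih _ hq (b / γ) rfl
    refine ⟨fun j => X * c j + C ((b % γ).coeff j), ?_⟩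
    have h1 := EuclideanDomain.div_add_mod b γ
    conv_lhs => rw [← h1, hsmall _ hr, hc, Finset.mul_sum, ← Finset.sum_add_distrib]
    refine Finset.sum_congr rfl fun j _ => ?_
    simp
    ring

lemma comp_inj (γ : ℂ[X]) (hγ : 0 < γ.natDegree) : Function.Injective (compRingHom γ) := by
  rw [injective_iff_map_eq_zero]
  intro p hp
  rw [coe_compRingHom_apply, comp_eq_zero_iff] at hp
  rcases hp with hp | hp
  · exact hp
  · rw [hp.2, natDegree_C] at hγ
    omega

lemma comp_charpoly (γ φ : ℂ[X]) (hγ : 0 < γ.natDegree) :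
    ∃ h : ℂ[X][X], h.Monic ∧ h.natDegree = γ.natDegree ∧ eval₂ (compRingHom γ) φ h = 0 := by
  choose c hc using fun i : Fin γ.natDegree => comp_span γ hγ (φ * X ^ (i : ℕ))
  let N : Matrix (Fin γ.natDegree) (Fin γ.natDegree) ℂ[X] := Matrix.of c
  refine ⟨N.charpoly, N.charpoly_monic, ?_, ?_⟩
  · rw [Matrix.charpoly_natDegree_eq_dim, Fintype.card_fin]
  · rw [eval₂_eq_eval_map, ← Matrix.charpoly_map, Matrix.eval_charpoly,
      ← Matrix.exists_mulVec_eq_zero_iff]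
    refine ⟨fun j => X ^ (j : ℕ), ?_, ?_⟩
    · intro h
      have := congrFun h ⟨0, hγ⟩
      simp at this
    · ext1 i
      rw [Matrix.sub_mulVec]
      simp only [Pi.sub_apply, Pi.zero_apply, Matrix.mulVec, dotProduct]
      have h1 : ∑ x, (Matrix.scalar (Fin γ.natDegree) φ) i x * (X : ℂ[X]) ^ (x : ℕ) = φ * X ^ (i : ℕ) := by
        rw [Finset.sum_eq_single i]
        · simp
        · intro j _ hj
          simp [Matrix.diagonal_apply_ne _ hj.symm]
        · simp
      rw [h1, hc i, sub_eq_zero]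
      rfl

theorem ams_lemma (γ φ : ℂ[X]) (hγ : 0 < γ.natDegree)
    (hX : (X : ℂ[X]) ∈ Algebra.adjoin ℂ ({γ, φ} : Set ℂ[X])) :
    ∃ c : ℂ[X], (φ - c.comp γ).natDegree < γ.natDegree := by
  have hδ : ∃ δ : ℂ[X][X], eval₂ (compRingHom γ) φ δ = X := by
    generalize (X : ℂ[X]) = z at hX
    induction hX using Algebra.adjoin_induction with
    | mem x hx =>
      rcases hx with rfl | rfl
      · exact ⟨C X, by simp⟩
      · exact ⟨X, by simp⟩
    | algebraMap r => exact ⟨C (C r), by simp⟩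
    | add x y _ _ hx hy =>
      obtain ⟨a, rfl⟩ := hx
      obtain ⟨b, rfl⟩ := hy
      exact ⟨a + b, by simp⟩
    | mul x y _ _ hx hy =>
      obtain ⟨a, rfl⟩ := hx
      obtain ⟨b, rfl⟩ := hy
      exact ⟨a * b, by simp⟩
  obtain ⟨δ, hδ⟩ := hδ
  obtain ⟨h, hm, hd, hh⟩ := comp_charpoly γ φ hγ
  have hginj : Function.Injective ((algebraMap ℂ[X] (RatFunc ℂ)).comp (compRingHom γ)) :=
    (RatFunc.algebraMap_injective ℂ).comp (comp_inj γ hγ)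
  let σ : FractionRing ℂ[X] →+* RatFunc ℂ := IsFractionRing.lift hginj
  have hσ : ∀ p : ℂ[X], σ (algebraMap _ _ p) = algebraMap _ _ (p.comp γ) := fun p =>
    IsFractionRing.lift_algebraMap hginj p
  have hev : ∀ p : ℂ[X][X], eval₂ σ (algebraMap ℂ[X] (RatFunc ℂ) φ)
      (p.map (algebraMap ℂ[X] (FractionRing ℂ[X]))) =
      algebraMap _ _ (eval₂ (compRingHom γ) φ p) := by
    intro p
    rw [eval₂_map, hom_eval₂]
    congr 1
    ext x
    · simp [hσ]
    · simp [hσ]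
  have hne : ∀ p : ℂ[X], algebraMap ℂ[X] (RatFunc ℂ) p ≠ 0 ↔ p ≠ 0 := fun p => by
    rw [Ne, FaithfulSMul.algebraMap_eq_zero_iff]
  let M : AMSData ℂ[X] (FractionRing ℂ[X]) (RatFunc ℂ) :=
    { D := RatFunc.intDegree
      hD := ⟨fun x y hx hy => RatFunc.intDegree_mul hx hy,
        fun x y _ hy hxy => RatFunc.intDegree_add_le hy hxy⟩
      ι := algebraMap _ _
      hι := IsFractionRing.injective _ _
      σ := σ
      s := algebraMap _ _ X
      hs := (hne _).2 X_ne_zero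
      hDs := by rw [RatFunc.intDegree_polynomial]; simp
      φ := algebraMap _ _ φ
      m := γ.natDegree
      hm := hγ
      hdiv := by
        intro k hk
        obtain ⟨a, b, hb, rfl⟩ := IsFractionRing.div_surjective (A := ℂ[X]) k
        have ha0 : a ≠ 0 := by rintro rfl; simp at hk
        have hb0 : b ≠ 0 := nonZeroDivisors.ne_zero hb
        have h1 : ∀ p : ℂ[X], p ≠ 0 → p.comp γ ≠ 0 := fun p hp h0 =>
          hp (comp_inj γ hγ (by simpa using h0))
        rw [map_div₀, hσ, hσ, RatFunc.intDegree_div ((hne _).2 (h1 a ha0)) ((hne _).2 (h1 b hb0)),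
          RatFunc.intDegree_polynomial, RatFunc.intDegree_polynomial, natDegree_comp,
          natDegree_comp]
        push_cast
        exact dvd_sub (dvd_mul_left _ _) (dvd_mul_left _ _)
      hspan := by
        intro i
        obtain ⟨c, hc⟩ := comp_span γ hγ (φ ^ i)
        refine ⟨fun j => algebraMap _ _ (c j), ?_⟩
        rw [← map_pow, hc, map_sum]
        refine Finset.sum_congr rfl fun j _ => ?_
        rw [hσ, map_mul, map_pow]
      δ := δ
      hδ := by rw [hev, hδ]
      h := h
      hmon := hm
      hdeg := hd
      hh := by rw [hev, hh, map_zero]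
      hnn := by
        intro p _
        rw [hev, RatFunc.intDegree_polynomial]
        positivity
      hunit := by
        intro r hr
        refine ⟨C (r : ℂ)⁻¹, ?_⟩
        rw [← C_eq_natCast, ← C_mul, mul_inv_cancel₀ (by exact_mod_cast hr), C_1] }
  obtain ⟨c, hc⟩ := M.main
  have h1 : M.φ - M.σ (M.ι c) = algebraMap _ _ (φ - c.comp γ) := by
    change algebraMap _ _ φ - σ (algebraMap _ _ c) = _
    rw [hσ, map_sub]
  rw [h1] at hc
  refine ⟨c, ?_⟩
  rcases hc with hc | hc
  · rw [FaithfulSMul.algebraMap_eq_zero_iff] at hc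
    rw [hc]; simpa using hγ
  · change RatFunc.intDegree _ < (γ.natDegree : ℤ) at hc
    rw [RatFunc.intDegree_polynomial] at hc
    exact_mod_cast hc

end AMS
section Newton

open Polynomial Filter Topology

/-- evaluation of `G ∈ ℂ[t][ξ]` at `(t, ξ)` -/
def E2 (G : ℂ[X][X]) (t ξ : ℂ) : ℂ := (G.eval (C ξ)).eval t

lemma E2_add (G H : ℂ[X][X]) (t ξ : ℂ) : E2 (G + H) t ξ = E2 G t ξ + E2 H t ξ := by simp [E2]
lemma E2_mul (G H : ℂ[X][X]) (t ξ : ℂ) : E2 (G * H) t ξ = E2 G t ξ * E2 H t ξ := by simp [E2]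
lemma E2_C (g : ℂ[X]) (t ξ : ℂ) : E2 (C g) t ξ = g.eval t := by simp [E2]
lemma E2_X (t ξ : ℂ) : E2 X t ξ = ξ := by simp [E2]

lemma E2_sum (G : ℂ[X][X]) (n : ℕ) (hn : G.natDegree < n) (t ξ : ℂ) :
    E2 G t ξ = ∑ l ∈ Finset.range n, (G.coeff l).eval t * ξ ^ l := by
  rw [E2, eval_eq_sum_range' hn, eval_finsetSum]
  simp

lemma E2_zero_left (G : ℂ[X][X]) (ξ : ℂ) : E2 G 0 ξ = (G.map (evalRingHom 0)).eval ξ := by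
  rw [E2_sum G (G.natDegree + 1) (by omega), eval_eq_sum_range' (n := G.natDegree + 1)
    (lt_of_le_of_lt natDegree_map_le (by omega))]
  simp

lemma E2_continuous (G : ℂ[X][X]) : Continuous fun p : ℂ × ℂ => E2 G p.1 p.2 := by
  have : (fun p : ℂ × ℂ => E2 G p.1 p.2) =
      fun p => ∑ l ∈ Finset.range (G.natDegree + 1), (G.coeff l).eval p.1 * p.2 ^ l := by
    funext p
    exact E2_sum G _ (by omega) _ _
  rw [this]
  fun_prop

lemma E2_tendsto (𝒰 : Filter ℕ) (G : ℂ[X][X]) (t ξ : ℕ → ℂ) (t0 x : ℂ)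
    (ht : Tendsto t 𝒰 (𝓝 t0)) (hξ : Tendsto ξ 𝒰 (𝓝 x)) :
    Tendsto (fun j => E2 G (t j) (ξ j)) 𝒰 (𝓝 (E2 G t0 x)) :=
  ((E2_continuous G).tendsto (t0, x)).comp (ht.prodMk_nhds hξ)

lemma poly_tendsto (𝒰 : Filter ℕ) (g : ℂ[X]) (t : ℕ → ℂ) (t0 : ℂ)
    (ht : Tendsto t 𝒰 (𝓝 t0)) : Tendsto (fun j => g.eval (t j)) 𝒰 (𝓝 (g.eval t0)) :=
  (g.continuous.tendsto t0).comp ht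

lemma ultra_lim (𝒰 : Ultrafilter ℕ) (ξ : ℕ → ℂ) :
    (∃ x, Tendsto ξ 𝒰 (𝓝 x)) ∨ Tendsto (fun j => ‖ξ j‖) 𝒰 atTop := by
  by_cases h : ∃ M : ℝ, ∀ᶠ j in 𝒰, ‖ξ j‖ ≤ M
  · left
    obtain ⟨M, hM⟩ := h
    have hc : IsCompact (Metric.closedBall (0 : ℂ) M) := isCompact_closedBall 0 M
    obtain ⟨x, -, hx⟩ := hc.ultrafilter_le_nhds (𝒰.map ξ) (by
      rw [le_principal_iff]
      have : ∀ᶠ j in 𝒰, ξ j ∈ Metric.closedBall (0 : ℂ) M := by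
        filter_upwards [hM] with j hj
        simpa using hj
      exact this)
    exact ⟨x, hx⟩
  · right
    push Not at h
    rw [tendsto_atTop]
    intro M
    have := h M
    filter_upwards [this] with j hj
    exact hj.le

/-- a path tending to `0` -/
def PT (𝒰 : Ultrafilter ℕ) (t : ℕ → ℂ) : Prop := Tendsto t 𝒰 (𝓝 0) ∧ ∀ᶠ j in 𝒰, t j ≠ 0

/-- `(t', ξ')` is a lift of the path `(t, ξ)` -/
def PathLift (𝒰 : Ultrafilter ℕ) (τ : ℕ × ℂ[X] × ℕ) (t ξ t' ξ' : ℕ → ℂ) : Prop :=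
  PT 𝒰 t' ∧ (∃ x, Tendsto ξ' 𝒰 (𝓝 x)) ∧
    ∀ᶠ j in 𝒰, t' j ^ τ.1 = t j ∧ τ.2.1.eval (t' j) + t' j ^ τ.2.2 * ξ' j = ξ j

def Adm (a : ℕ) (G : ℂ[X][X]) (τ : ℕ × ℂ[X] × ℕ) : Prop :=
  0 < τ.1 ∧ ∃ G' : ℂ[X][X], ∀ t ξ : ℂ,
    E2 G (t ^ τ.1) (τ.2.1.eval t + t ^ τ.2.2 * ξ) = t ^ (τ.1 * a) * E2 G' t ξ

def Concl (𝒰 : Ultrafilter ℕ) (a : ℕ) (G : ℂ[X][X]) (S : Set ℂ) : Prop :=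
  ∃ T : Set (ℕ × ℂ[X] × ℕ), T.Finite ∧ (∀ τ ∈ T, Adm a G τ) ∧
    ∀ (t ξ : ℕ → ℂ) (x L : ℂ), PT 𝒰 t → Tendsto ξ 𝒰 (𝓝 x) → x ∈ S →
      Tendsto (fun j => E2 G (t j) (ξ j) / t j ^ a) 𝒰 (𝓝 L) →
      ∃ τ ∈ T, ∃ t' ξ' : ℕ → ℂ, PathLift 𝒰 τ t ξ t' ξ'

lemma concl_zero (𝒰 : Ultrafilter ℕ) (G : ℂ[X][X]) : Concl 𝒰 0 G Set.univ := by
  refine ⟨{(1, 0, 0)}, Set.finite_singleton _, ?_, ?_⟩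
  · rintro τ rfl
    exact ⟨one_pos, G, by intro t ξ; simp⟩
  · intro t ξ x L ht hξ _ _
    exact ⟨_, rfl, t, ξ, ht, ⟨x, hξ⟩, by simp⟩

lemma concl_succ (𝒰 : Ultrafilter ℕ) (a : ℕ) (G : ℂ[X][X]) (S : Set ℂ) (h : Concl 𝒰 a G S) :
    Concl 𝒰 (a + 1) (C X * G) S := by
  obtain ⟨T, hT, h1, h2⟩ := h
  refine ⟨T, hT, ?_, ?_⟩
  · intro τ hτ
    obtain ⟨hp, G', hG'⟩ := h1 τ hτ
    refine ⟨hp, G', fun t ξ => ?_⟩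
    rw [E2_mul, E2_C, hG', eval_X]
    ring
  · intro t ξ x L ht hξ hx hL
    refine h2 t ξ x L ht hξ hx (hL.congr' ?_)
    filter_upwards [ht.2] with j hj
    rw [E2_mul, E2_C, eval_X, pow_succ]
    field_simp

lemma concl_union (𝒰 : Ultrafilter ℕ) (a : ℕ) (G : ℂ[X][X]) (s : Set ℂ) (hs : s.Finite)
    (h : ∀ x ∈ s, Concl 𝒰 a G {x}) : Concl 𝒰 a G s := by
  choose! T hT h1 h2 using h
  refine ⟨⋃ x ∈ s, T x, hs.biUnion hT, ?_, ?_⟩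
  · intro τ hτ
    simp only [Set.mem_iUnion] at hτ
    obtain ⟨x, hx, hτ⟩ := hτ
    exact h1 x hx τ hτ
  · intro t ξ x L ht hξ hx hL
    obtain ⟨τ, hτ, h⟩ := h2 x hx t ξ x L ht hξ rfl hL
    exact ⟨τ, by simp only [Set.mem_iUnion]; exact ⟨x, hx, hτ⟩, h⟩

lemma root_tendsto (𝒰 : Filter ℕ) (q : ℕ) (hq : 0 < q) (t t' : ℕ → ℂ) (h : ∀ j, t' j ^ q = t j)
    (ht : Tendsto t 𝒰 (𝓝 0)) : Tendsto t' 𝒰 (𝓝 0) := by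
  rw [tendsto_zero_iff_norm_tendsto_zero] at ht ⊢
  rw [Metric.tendsto_nhds] at ht ⊢
  intro ε hε
  filter_upwards [ht (ε ^ q) (by positivity)] with j hj
  simp only [dist_zero_right, norm_norm] at hj ⊢
  rw [← h, norm_pow] at hj
  exact lt_of_pow_lt_pow_left₀ q hε.le hj

/-- recursion step: a substitution through which all paths ending in `S` lift. -/
lemma concl_step (𝒰 : Ultrafilter ℕ) (a : ℕ) (G : ℂ[X][X]) (S : Set ℂ) (q : ℕ) (hq : 0 < q)
    (y : ℂ[X]) (p b a' : ℕ) (hb : b + a' = q * a) (G1 : ℂ[X][X])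
    (hG1 : ∀ t ξ : ℂ, E2 G (t ^ q) (y.eval t + t ^ p * ξ) = t ^ b * E2 G1 t ξ)
    (hlift : ∀ (t ξ : ℕ → ℂ) (x L : ℂ), PT 𝒰 t → Tendsto ξ 𝒰 (𝓝 x) → x ∈ S →
      Tendsto (fun j => E2 G (t j) (ξ j) / t j ^ a) 𝒰 (𝓝 L) →
      ∃ t' ξ' : ℕ → ℂ, PathLift 𝒰 (q, y, p) t ξ t' ξ')
    (hc : Concl 𝒰 a' G1 Set.univ) : Concl 𝒰 a G S := by
  obtain ⟨T, hT, h1, h2⟩ := hc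
  let f : (ℕ × ℂ[X] × ℕ) → (ℕ × ℂ[X] × ℕ) := fun τ =>
    (q * τ.1, y.comp (X ^ τ.1) + X ^ (τ.1 * p) * τ.2.1, τ.1 * p + τ.2.2)
  refine ⟨f '' T, hT.image f, ?_, ?_⟩
  · rintro _ ⟨τ, hτ, rfl⟩
    obtain ⟨hp, G', hG'⟩ := h1 τ hτ
    refine ⟨Nat.mul_pos hq hp, G', fun t ξ => ?_⟩
    have e1 : t ^ (q * τ.1) = (t ^ τ.1) ^ q := by rw [← pow_mul, mul_comm]
    have e2 : (y.comp (X ^ τ.1) + X ^ (τ.1 * p) * τ.2.1).eval t + t ^ (τ.1 * p + τ.2.2) * ξ =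
        y.eval (t ^ τ.1) + (t ^ τ.1) ^ p * (τ.2.1.eval t + t ^ τ.2.2 * ξ) := by
      simp only [eval_add, eval_comp, eval_pow, eval_X, eval_mul, pow_mul, pow_add]
      ring
    simp only [f]
    rw [e2, e1, hG1, hG', ← mul_assoc, ← pow_mul, ← pow_add]
    congr 2
    calc τ.1 * b + τ.1 * a' = τ.1 * (b + a') := by ring
      _ = q * τ.1 * a := by rw [hb]; ring
  · intro t ξ x L ht hξ hx hL
    obtain ⟨t', ξ', ht', ⟨x', hx'⟩, hev⟩ := hlift t ξ x L ht hξ hx hL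
    obtain ⟨τ, hτ, t'', ξ'', ht'', hx'', hev''⟩ := h2 t' ξ' x' L ht' hx' trivial (by
      refine hL.congr' ?_
      filter_upwards [hev, ht'.2] with j hj hj0
      rw [← hj.2, ← hj.1, hG1, ← pow_mul, ← hb, pow_add]
      field_simp)
    refine ⟨_, ⟨τ, hτ, rfl⟩, t'', ξ'', ht'', hx'', ?_⟩
    filter_upwards [hev, hev''] with j hj hj''
    refine ⟨?_, ?_⟩
    · simp only [f]
      rw [← hj.1, ← hj''.1, ← pow_mul, mul_comm]
    · simp only [f, eval_add, eval_comp, eval_pow, eval_X, eval_mul]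
      rw [← hj.2, ← hj''.2, hj''.1, pow_add, pow_mul, hj''.1]
      ring
lemma map_taylor_eval (G : ℂ[X][X]) (y : ℂ[X]) :
    (taylor y G).map (evalRingHom (0 : ℂ)) = taylor (y.eval 0) (G.map (evalRingHom 0)) := by
  simp [taylor_apply, Polynomial.map_comp]

lemma taylor_rootMult (F : ℂ[X]) (hF : F ≠ 0) (x : ℂ) :
    (∀ l < F.rootMultiplicity x, (taylor x F).coeff l = 0) ∧
      (taylor x F).coeff (F.rootMultiplicity x) ≠ 0 := by
  set μ := F.rootMultiplicity x with hμ
  obtain ⟨H, hH, hnd⟩ := exists_eq_pow_rootMultiplicity_mul_and_not_dvd F hF x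
  rw [← hμ] at hH
  have h1 : taylor x F = X ^ μ * taylor x H := by
    conv_lhs => rw [hH]
    rw [taylor_mul, taylor_pow]
    simp
  refine ⟨fun l hl => ?_, ?_⟩
  · rw [h1, coeff_X_pow_mul', if_neg (by omega)]
  · rw [h1, coeff_X_pow_mul', if_pos le_rfl, Nat.sub_self, taylor_coeff_zero]
    intro h
    exact hnd (dvd_iff_isRoot.2 h)

lemma coeff_taylor_zero (G : ℂ[X][X]) (y : ℂ[X]) (l : ℕ) :
    ((taylor y G).coeff l).eval 0 = (taylor (y.eval 0) (G.map (evalRingHom 0))).coeff l := by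
  rw [← map_taylor_eval, coeff_map]
  rfl

lemma eval_mod_sq {A : Type} [CommRing A] (p : A[X]) (e : A) :
    ∃ k, p.eval e = p.coeff 0 + p.coeff 1 * e + k * e ^ 2 := by
  have h1 := congrArg (eval e) (divX_mul_X_add p)
  have h2 := congrArg (eval e) (divX_mul_X_add p.divX)
  simp only [eval_add, eval_mul, eval_X, eval_C, coeff_divX] at h1 h2
  refine ⟨p.divX.divX.eval e, ?_⟩
  rw [← h1, ← h2]
  ring

lemma shift_exists (G : ℂ[X][X]) (hF : G.map (evalRingHom (0 : ℂ)) ≠ 0) (x : ℂ) (μ : ℕ)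
    (hμ : (G.map (evalRingHom (0 : ℂ))).rootMultiplicity x = μ + 1) (n : ℕ) :
    ∃ y : ℂ[X], y.eval 0 = x ∧ X ^ n ∣ (taylor y G).coeff μ := by
  obtain ⟨hz, hnz⟩ := taylor_rootMult _ hF x
  rw [hμ] at hz hnz
  induction n with
  | zero => exact ⟨C x, by simp, by simp⟩
  | succ n ih =>
    obtain ⟨y, hy, w, hw⟩ := ih
    rcases Nat.eq_zero_or_pos n with rfl | hn
    · refine ⟨y, hy, ?_⟩
      rw [zero_add, pow_one, X_dvd_iff, coeff_zero_eq_eval_zero, coeff_taylor_zero, hy]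
      exact hz μ (by omega)
    · set H := taylor y G with hH
      have hHμ : (H.coeff (μ + 1)).eval 0 ≠ 0 := by rw [hH, coeff_taylor_zero, hy]; exact hnz
      have hc : ((μ + 1 : ℕ) : ℂ) * (H.coeff (μ + 1)).eval 0 ≠ 0 :=
        mul_ne_zero (by exact_mod_cast Nat.succ_ne_zero μ) hHμ
      set lam : ℂ := - w.eval 0 / (((μ + 1 : ℕ) : ℂ) * (H.coeff (μ + 1)).eval 0) with hlam
      refine ⟨y + C lam * X ^ n, ?_, ?_⟩
      · simp [hy, hn.ne']
      · have h1 : taylor (y + C lam * X ^ n) G = taylor (C lam * X ^ n) H := by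
          rw [hH, taylor_taylor, add_comm]
        rw [h1, taylor_coeff]
        obtain ⟨k, hk⟩ := eval_mod_sq (hasseDeriv μ H) (C lam * X ^ n)
        rw [hk, hasseDeriv_coeff, hasseDeriv_coeff]
        have h2 : (0 + μ).choose μ = 1 := by simp
        have h3 : (1 + μ).choose μ = μ + 1 := by rw [add_comm, Nat.choose_succ_self_right]
        rw [h2, h3, zero_add, add_comm 1 μ, hw]
        have h4 : ((1 : ℕ) : ℂ[X]) * (X ^ n * w) + ((μ + 1 : ℕ) : ℂ[X]) * H.coeff (μ + 1) * (C lam * X ^ n)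
            + k * (C lam * X ^ n) ^ 2 = X ^ n * (w + ((μ + 1 : ℕ) : ℂ[X]) * H.coeff (μ + 1) * C lam)
              + X ^ n * X ^ n * (k * C lam ^ 2) := by
          push_cast; ring
        rw [h4, pow_succ]
        refine dvd_add (mul_dvd_mul_left _ ?_) ?_
        · rw [X_dvd_iff, coeff_zero_eq_eval_zero]
          simp only [eval_add, eval_mul, eval_natCast, eval_C]
          rw [hlam]
          field_simp
          ring
        · refine Dvd.dvd.mul_right (mul_dvd_mul_left _ ?_) _
          exact dvd_pow_self _ hn.ne'

lemma mult_lt (F : ℂ[X]) (μ l : ℕ) (hl : l < μ) (hdeg : F.natDegree ≤ μ + 1)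
    (h1 : F.coeff (μ + 1) ≠ 0) (h2 : F.coeff μ = 0) (h3 : F.coeff l ≠ 0) (x : ℂ) :
    F.rootMultiplicity x ≤ μ := by
  by_contra hlt
  push Not at hlt
  have hF : F ≠ 0 := by rintro rfl; simp at h3
  obtain ⟨H, hH⟩ := (le_rootMultiplicity_iff hF).1 (Nat.succ_le_of_lt hlt)
  have hH0 : H ≠ 0 := by rintro rfl; simp at hH; exact hF hH
  have hm : ((X - C x) ^ (μ + 1)).Monic := (monic_X_sub_C x).pow _
  have hd : H.natDegree = 0 := by
    have := congrArg natDegree hH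
    rw [natDegree_mul hm.ne_zero hH0, natDegree_pow, natDegree_X_sub_C] at this
    omega
  obtain ⟨c, rfl⟩ := natDegree_eq_zero.1 hd
  have hc : c ≠ 0 := by simpa using hH0
  have hco : ∀ i, F.coeff i = (X - C x : ℂ[X]).coeff 0 * 0 + ((X - C x) ^ (μ + 1)).coeff i * c := by
    intro i; conv_lhs => rw [hH]
    rw [coeff_mul_C]; ring
  have hμ := hco μ
  rw [h2, sub_eq_add_neg, ← C_neg, coeff_X_add_C_pow] at hμ
  have hx : x = 0 := by
    have e : μ + 1 - μ = 1 := by omega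
    rw [e, Nat.choose_succ_self_right] at hμ
    have : ((μ + 1 : ℕ) : ℂ) ≠ 0 := by exact_mod_cast Nat.succ_ne_zero μ
    simp at hμ
    rcases hμ with (h | h) | h
    · exact h
    · exact absurd h (by exact_mod_cast this)
    · exact absurd h hc
  apply h3
  rw [hco l, hx]
  have : l ≠ μ + 1 := by omega
  simp [coeff_X_pow, this]
lemma newton_w (g : ℕ → ℂ[X]) (m a : ℕ) (hm : 0 < m) (ha : 0 < a)
    (hz : ∀ l < m, (g l).eval 0 = 0) (hnz : (g m).eval 0 ≠ 0) (hμ : X ^ a ∣ g (m - 1)) :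
    ∃ q p l0 : ℕ, 0 < q ∧ l0 < m ∧ p * m ≤ q * a ∧ ∀ l, ∃ w : ℂ[X],
      expand ℂ q (g l) * X ^ (p * l) = X ^ (p * m) * w ∧ (m < l → w.eval 0 = 0) ∧
      (l = m → w.eval 0 ≠ 0) ∧ (p * m < q * a → l = m - 1 → w.eval 0 = 0) ∧
      (p * m < q * a → l = l0 → w.eval 0 ≠ 0) := by
  classical
  let o : ℕ → ℕ := fun l => Nat.findGreatest (fun o => X ^ o ∣ g l) a
  have ho1 : ∀ l, X ^ (o l) ∣ g l := fun l =>
    Nat.findGreatest_spec (P := fun o => X ^ o ∣ g l) (Nat.zero_le a) (by simp)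
  have ho2 : ∀ l, o l ≤ a := fun l => Nat.findGreatest_le a
  have ho3 : ∀ l, o l < a → ¬ X ^ (o l + 1) ∣ g l := fun l hl =>
    Nat.findGreatest_is_greatest (P := fun o => X ^ o ∣ g l) (Nat.lt_succ_self _) hl
  have ho4 : ∀ l < m, 1 ≤ o l := fun l hl =>
    Nat.le_findGreatest ha (by rw [pow_one, X_dvd_iff, coeff_zero_eq_eval_zero]; exact hz l hl)
  have ho5 : o (m - 1) = a := le_antisymm (ho2 _) (Nat.le_findGreatest le_rfl hμ)
  obtain ⟨l0, hl0, hmin⟩ := Finset.exists_min_image (Finset.range m)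
    (fun l => (o l : ℚ) / ((m : ℚ) - l)) ⟨0, by simpa using hm⟩
  rw [Finset.mem_range] at hl0
  have hmin' : ∀ l < m, o l0 * (m - l) ≤ (m - l0) * o l := by
    intro l hl
    have h := hmin l (by simpa using hl)
    have e1 : (0 : ℚ) < (m : ℚ) - l := by rw [sub_pos]; exact_mod_cast hl
    have e2 : (0 : ℚ) < (m : ℚ) - l0 := by rw [sub_pos]; exact_mod_cast hl0
    rw [div_le_div_iff₀ e2 e1, ← Nat.cast_sub hl.le, ← Nat.cast_sub hl0.le] at h
    rw [mul_comm (m - l0)]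
    exact_mod_cast h
  have hq : 0 < m - l0 := by omega
  have hp := ho4 l0 hl0
  refine ⟨m - l0, o l0, l0, hq, hl0, ?_, ?_⟩
  · have := hmin' 0 hm
    simp only [Nat.sub_zero] at this
    exact this.trans (Nat.mul_le_mul_left _ (ho2 0))
  · intro l
    rcases lt_trichotomy l m with hl | rfl | hl
    · obtain ⟨u, hu⟩ := ho1 l
      have hle := hmin' l hl
      refine ⟨X ^ ((m - l0) * o l - o l0 * (m - l)) * expand ℂ (m - l0) u, ?_, by omega, by omega, ?_, ?_⟩
      · rw [hu, map_mul, map_pow, expand_X, ← pow_mul]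
        have e : X ^ (o l0 * m) * (X ^ ((m - l0) * o l - o l0 * (m - l)) * expand ℂ (m - l0) u) =
            X ^ (o l0 * m + ((m - l0) * o l - o l0 * (m - l))) * expand ℂ (m - l0) u := by
          rw [pow_add]; ring
        have e' : X ^ ((m - l0) * o l) * (expand ℂ (m - l0)) u * X ^ (o l0 * l) =
            X ^ ((m - l0) * o l + o l0 * l) * expand ℂ (m - l0) u := by rw [pow_add]; ring
        rw [e, e']
        congr 2
        obtain ⟨k, rfl⟩ : ∃ k, m = l + k := ⟨m - l, by omega⟩
        rw [Nat.add_sub_cancel_left] at hle ⊢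
        rw [mul_add]
        omega
      · intro hlt hlm
        have : (m - l0) * o l - o l0 * (m - l) ≠ 0 := by
          subst hlm
          rw [ho5]
          have e : m - (m - 1) = 1 := by omega
          rw [e, mul_one]
          have : o l0 ≤ o l0 * m := Nat.le_mul_of_pos_right _ hm
          omega
        simp [this]
      · intro hlt hl'
        subst hl'
        have hlta : o l < a := by
          by_contra h
          push Not at h
          have : (m - l) * a ≤ o l * m := by
            rw [mul_comm]
            exact Nat.mul_le_mul h (Nat.sub_le _ _)
          omega
        have e : (m - l) * o l - o l * (m - l) = 0 := by rw [mul_comm]; omega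
        rw [e, pow_zero, one_mul, expand_eval, zero_pow hq.ne', ← coeff_zero_eq_eval_zero]
        intro h
        apply ho3 l hlta
        obtain ⟨v, hv⟩ := X_dvd_iff.2 h
        exact ⟨v, by conv_lhs => rw [hu, hv]
                     ring⟩
    · refine ⟨expand ℂ (l - l0) (g l), by ring, by omega, ?_, by omega, by omega⟩
      intro _
      rw [expand_eval, zero_pow hq.ne']
      exact hnz
    · refine ⟨expand ℂ (m - l0) (g l) * X ^ (o l0 * (l - m)), ?_, ?_, by omega, by omega, by omega⟩
      · obtain ⟨k, rfl⟩ : ∃ k, l = m + k := ⟨l - m, by omega⟩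
        rw [Nat.add_sub_cancel_left, mul_add, pow_add]
        ring
      · intro _
        have : o l0 * (l - m) ≠ 0 := Nat.mul_ne_zero (by omega) (by omega)
        simp [this]

lemma E2_taylor (G : ℂ[X][X]) (y : ℂ[X]) (t η : ℂ) :
    E2 (taylor y G) t η = E2 G t (y.eval t + η) := by
  have h : ∀ (G : ℂ[X][X]) (p : ℂ[X]), (G.eval p).eval t = E2 G t (p.eval t) := by
    intro G p
    rw [E2_sum G (G.natDegree + 1) (by omega), eval_eq_sum_range (p := G), eval_finsetSum]
    simp
  rw [E2, taylor_eval, h]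
  simp [add_comm]

lemma newton_point (𝒰 : Ultrafilter ℕ) (d : ℕ)
    (ih : ∀ (a : ℕ) (G : ℂ[X][X]), G.map (evalRingHom (0 : ℂ)) ≠ 0 →
      (∀ x, (G.map (evalRingHom (0 : ℂ))).rootMultiplicity x ≤ d) → Concl 𝒰 a G Set.univ)
    (a : ℕ) (ha : 0 < a) (G : ℂ[X][X]) (hF : G.map (evalRingHom (0 : ℂ)) ≠ 0) (x : ℂ) (μ : ℕ)
    (hμ : (G.map (evalRingHom (0 : ℂ))).rootMultiplicity x = μ + 1) (hμd : μ ≤ d) :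
    Concl 𝒰 a G {x} := by
  obtain ⟨y, hy, hya⟩ := shift_exists G hF x μ hμ a
  obtain ⟨hz, hnz⟩ := taylor_rootMult _ hF x
  rw [hμ] at hz hnz
  set H := taylor y G with hH
  have hz' : ∀ l < μ + 1, (H.coeff l).eval 0 = 0 := fun l hl => by
    rw [hH, coeff_taylor_zero, hy]; exact hz l hl
  have hnz' : (H.coeff (μ + 1)).eval 0 ≠ 0 := by rw [hH, coeff_taylor_zero, hy]; exact hnz
  obtain ⟨q, p, l0, hq, hl0, hpq, hw⟩ :=
    newton_w (fun l => H.coeff l) (μ + 1) a (by omega) ha hz' hnz' hya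
  choose w hw1 hw2 hw3 hw4 hw5 using hw
  set n := H.natDegree + 1 with hn
  set G3 : ℂ[X][X] := ∑ l ∈ Finset.range n, C (w l) * X ^ l with hG3
  have hwbig : ∀ l, H.natDegree < l → w l = 0 := by
    intro l hl
    have := hw1 l
    rw [coeff_eq_zero_of_natDegree_lt hl, map_zero, zero_mul] at this
    have h2 := this.symm
    rw [mul_eq_zero] at h2
    rcases h2 with h2 | h2
    · exact absurd h2 (pow_ne_zero _ X_ne_zero)
    · exact h2
  have hG3c : ∀ l, G3.coeff l = w l := by
    intro l
    rw [hG3, finsetSum_coeff]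
    simp only [coeff_C_mul, coeff_X_pow, mul_ite, mul_one, mul_zero, Finset.sum_ite_eq,
      Finset.mem_range]
    split_ifs with h
    · rfl
    · exact (hwbig l (by omega)).symm
  have hG3E : ∀ t ξ, E2 G3 t ξ = ∑ l ∈ Finset.range n, (w l).eval t * ξ ^ l := by
    intro t ξ
    have : G3.natDegree < n := by
      have : G3.natDegree ≤ H.natDegree := by
        rw [natDegree_le_iff_coeff_eq_zero]
        intro l hl
        rw [hG3c, hwbig l hl]
      omega
    rw [E2_sum G3 n this]
    simp only [hG3c]
  have hHE : ∀ t ξ, E2 G (t ^ q) (y.eval (t ^ q) + t ^ p * ξ) =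
      t ^ (p * (μ + 1)) * E2 G3 t ξ := by
    intro t ξ
    rw [← E2_taylor, ← hH, E2_sum H n (by omega), hG3E, Finset.mul_sum]
    refine Finset.sum_congr rfl fun l _ => ?_
    have := congrArg (eval t) (hw1 l)
    simp only [eval_mul, expand_eval, eval_pow, eval_X] at this
    rw [← mul_assoc, ← this, mul_pow, ← pow_mul]
    ring
  refine concl_step 𝒰 a G {x} q hq (y.comp (X ^ q)) p (p * (μ + 1)) (q * a - p * (μ + 1))
    (by omega) G3 ?_ ?_ ?_
  · intro t ξ
    rw [← hHE]
    simp
  · rintro t ξ x' L ht hξ rfl hL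
    have hroot : ∀ j, ∃ s : ℂ, s ^ q = t j := fun j => IsAlgClosed.exists_pow_nat_eq (t j) hq
    choose t' ht' using hroot
    have ht'0 : Tendsto t' 𝒰 (𝓝 0) := root_tendsto 𝒰 q hq t t' ht' ht.1
    have ht'ne : ∀ᶠ j in 𝒰, t' j ≠ 0 := by
      filter_upwards [ht.2] with j hj h
      apply hj
      rw [← ht' j, h, zero_pow hq.ne']
    set ξ' : ℕ → ℂ := fun j => (ξ j - y.eval (t j)) / t' j ^ p with hξ'
    have hback : ∀ᶠ j in 𝒰, y.eval (t j) + t' j ^ p * ξ' j = ξ j := by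
      filter_upwards [ht'ne] with j hj
      rw [hξ']
      field_simp
      ring
    refine ⟨t', ξ', ⟨ht'0, ht'ne⟩, ?_, ?_⟩
    · rcases ultra_lim 𝒰 ξ' with h | h
      · exact h
      exfalso
      have hη : Tendsto (fun j => ξ j - y.eval (t j)) 𝒰 (𝓝 0) := by
        have := hξ.sub (poly_tendsto 𝒰 y t 0 ht.1)
        rwa [hy, sub_self] at this
      have hξ'ne : ∀ᶠ j in 𝒰, ξ' j ≠ 0 := by
        filter_upwards [h.eventually_gt_atTop 0] with j hj
        exact norm_pos_iff.1 hj
      have hinv : Tendsto (fun j => (ξ' j)⁻¹) 𝒰 (𝓝 0) := by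
        rw [tendsto_zero_iff_norm_tendsto_zero]
        simp only [norm_inv]
        exact h.inv_tendsto_atTop
      -- the quotient tends to `w (μ+1) (0)`
      have hA : Tendsto (fun j => E2 G3 (t' j) (ξ' j) * ((ξ' j)⁻¹) ^ (μ + 1)) 𝒰
          (𝓝 (∑ l ∈ Finset.range n, if l = μ + 1 then (w l).eval 0 else 0)) := by
        have : (fun j => E2 G3 (t' j) (ξ' j) * ((ξ' j)⁻¹) ^ (μ + 1)) = fun j =>
            ∑ l ∈ Finset.range n, (w l).eval (t' j) * ξ' j ^ l * ((ξ' j)⁻¹) ^ (μ + 1) := by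
          funext j
          rw [hG3E, Finset.sum_mul]
        rw [this]
        refine tendsto_finsetSum _ fun l _ => ?_
        have hwl := poly_tendsto 𝒰 (w l) t' 0 ht'0
        rcases lt_trichotomy l (μ + 1) with hl | hl | hl
        · rw [if_neg hl.ne]
          obtain ⟨k, hk⟩ : ∃ k, μ + 1 = l + (k + 1) := ⟨μ - l, by omega⟩
          have := hwl.mul (hinv.pow (k + 1))
          rw [zero_pow (by omega), mul_zero] at this
          refine this.congr' ?_
          filter_upwards [hξ'ne] with j hj
          have hc : ξ' j ^ l * (ξ' j)⁻¹ ^ l = 1 := by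
            rw [← mul_pow, mul_inv_cancel₀ hj, one_pow]
          rw [hk, pow_add]
          linear_combination (-(w l).eval (t' j) * (ξ' j)⁻¹ ^ (k + 1)) * hc
        · rw [if_pos hl]
          refine hwl.congr' ?_
          filter_upwards [hξ'ne] with j hj
          have hc : ξ' j ^ (μ + 1) * (ξ' j)⁻¹ ^ (μ + 1) = 1 := by
            rw [← mul_pow, mul_inv_cancel₀ hj, one_pow]
          rw [hl]
          linear_combination (-(w (μ + 1)).eval (t' j)) * hc
        · rw [if_neg hl.ne']
          obtain ⟨k, hk⟩ : ∃ k, l = μ + 1 + (k + 1) := ⟨l - μ - 2, by omega⟩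
          have := (poly_tendsto 𝒰 (H.coeff l) t 0 ht.1).mul (hη.pow (k + 1))
          rw [zero_pow (by omega), mul_zero] at this
          refine this.congr' ?_
          filter_upwards [hξ'ne, ht'ne, hback] with j hj hj' hjb
          have h5 := congrArg (eval (t' j)) (hw1 l)
          simp only [eval_mul, expand_eval, eval_pow, eval_X, ht' j] at h5
          have h6 : (w l).eval (t' j) = (H.coeff l).eval (t j) * t' j ^ (p * (k + 1)) := by
            have h7 : t' j ^ (p * (μ + 1)) ≠ 0 := pow_ne_zero _ hj'
            have h8 : p * l = p * (μ + 1) + p * (k + 1) := by rw [hk]; ring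
            rw [h8, pow_add] at h5
            apply mul_left_cancel₀ h7
            rw [← h5]; ring
          have h9 : ξ j - y.eval (t j) = t' j ^ p * ξ' j := by rw [← hjb]; ring
          have hc : ξ' j ^ (μ + 1) * (ξ' j)⁻¹ ^ (μ + 1) = 1 := by
            rw [← mul_pow, mul_inv_cancel₀ hj, one_pow]
          rw [h6, h9, hk, pow_add (ξ' j), mul_pow, ← pow_mul]
          linear_combination (-(H.coeff (μ + 1 + (k + 1))).eval (t j) * t' j ^ (p * (k + 1)) *
            ξ' j ^ (k + 1)) * hc
      have hmn : μ + 1 ∈ Finset.range n := by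
        rw [Finset.mem_range]
        have : μ + 1 ≤ H.natDegree := by
          apply le_natDegree_of_ne_zero
          intro h0
          rw [h0] at hnz'
          simp at hnz'
        omega
      rw [Finset.sum_ite_eq' , if_pos hmn] at hA
      have hB : Tendsto (fun j => E2 G3 (t' j) (ξ' j) * ((ξ' j)⁻¹) ^ (μ + 1)) 𝒰 (𝓝 0) := by
        have := (hL.mul (ht'0.pow (q * a - p * (μ + 1)))).mul (hinv.pow (μ + 1))
        rw [zero_pow (n := μ + 1) (by omega), mul_zero] at this
        refine this.congr' ?_
        filter_upwards [ht'ne, hback] with j hj hjb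
        have h5 := hHE (t' j) (ξ' j)
        rw [ht' j, hjb] at h5
        have h7 : t' j ^ (p * (μ + 1)) ≠ 0 := pow_ne_zero _ hj
        have h8 : t j ^ a = t' j ^ (p * (μ + 1)) * t' j ^ (q * a - p * (μ + 1)) := by
          rw [← ht' j, ← pow_mul, ← pow_add]
          congr 1
          omega
        have h9 : t' j ^ (q * a - p * (μ + 1)) ≠ 0 := pow_ne_zero _ hj
        rw [h5, h8]
        field_simp
      exact hw3 (μ + 1) rfl (tendsto_nhds_unique hA hB)
    · filter_upwards [hback] with j hj
      refine ⟨ht' j, ?_⟩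
      rw [← hj]
      simp [ht' j]
  · rcases Nat.eq_zero_or_pos (q * a - p * (μ + 1)) with h0 | hpos
    · rw [h0]; exact concl_zero 𝒰 G3
    · have hlt : p * (μ + 1) < q * a := by omega
      have hcF : ∀ l, (G3.map (evalRingHom (0 : ℂ))).coeff l = (w l).eval 0 := by
        intro l
        rw [coeff_map, hG3c]; rfl
      have hl0μ : l0 < μ := by
        refine lt_of_le_of_ne (by omega) ?_
        intro h
        exact hw5 l0 hlt rfl (hw4 l0 hlt (by omega))
      refine ih _ G3 ?_ ?_
      · intro h
        apply hw3 (μ + 1) rfl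
        rw [← hcF, h, coeff_zero]
      · intro z
        refine le_trans (mult_lt _ μ l0 hl0μ ?_ ?_ ?_ ?_ z) hμd
        · rw [natDegree_le_iff_coeff_eq_zero]
          intro l hl
          rw [hcF]
          exact hw2 l hl
        · rw [hcF]; exact hw3 _ rfl
        · rw [hcF]; exact hw4 _ hlt (by omega)
        · rw [hcF]; exact hw5 _ hlt rfl

lemma newton_normal (𝒰 : Ultrafilter ℕ) (d : ℕ) :
    ∀ (a : ℕ) (G : ℂ[X][X]), G.map (evalRingHom (0 : ℂ)) ≠ 0 →
      (∀ x, (G.map (evalRingHom (0 : ℂ))).rootMultiplicity x ≤ d) → Concl 𝒰 a G Set.univ := by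
  -- reduce to the roots of `G` at `t = 0`
  have key : ∀ (a : ℕ) (G : ℂ[X][X]), 0 < a → G.map (evalRingHom (0 : ℂ)) ≠ 0 →
      (∀ x, (G.map (evalRingHom (0 : ℂ))).IsRoot x → Concl 𝒰 a G {x}) → Concl 𝒰 a G Set.univ := by
    intro a G ha hF h
    obtain ⟨T, hT, h1, h2⟩ := concl_union 𝒰 a G {x | (G.map (evalRingHom (0 : ℂ))).IsRoot x}
      (finite_setOfPred_isRoot hF) h
    refine ⟨T, hT, h1, fun t ξ x L ht hξ _ hL => h2 t ξ x L ht hξ ?_ hL⟩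
    have hA := E2_tendsto 𝒰 G t ξ 0 x ht.1 hξ
    have hB : Tendsto (fun j => E2 G (t j) (ξ j)) 𝒰 (𝓝 0) := by
      have := hL.mul (ht.1.pow a)
      rw [zero_pow ha.ne', mul_zero] at this
      refine this.congr' ?_
      filter_upwards [ht.2] with j hj
      field_simp
    have := tendsto_nhds_unique hA hB
    rw [E2_zero_left] at this
    exact this
  induction d with
  | zero =>
    intro a G hF hm
    rcases Nat.eq_zero_or_pos a with rfl | ha
    · exact concl_zero 𝒰 G
    · refine key a G ha hF fun x hx => ?_
      have := (rootMultiplicity_pos hF).2 hx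
      have := hm x
      omega
  | succ d ih =>
    intro a G hF hm
    rcases Nat.eq_zero_or_pos a with rfl | ha
    · exact concl_zero 𝒰 G
    · refine key a G ha hF fun x hx => ?_
      have h1 := (rootMultiplicity_pos hF).2 hx
      have h2 := hm x
      exact newton_point 𝒰 d ih a ha G hF x
        ((G.map (evalRingHom (0 : ℂ))).rootMultiplicity x - 1) (by omega) (by omega)

theorem newton (𝒰 : Ultrafilter ℕ) (a : ℕ) (G : ℂ[X][X]) : Concl 𝒰 a G Set.univ := by
  induction a generalizing G with
  | zero => exact concl_zero 𝒰 G
  | succ a ih =>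
    by_cases hF : G.map (evalRingHom (0 : ℂ)) = 0
    · have : C X ∣ G := by
        rw [C_dvd_iff_dvd_coeff]
        intro i
        rw [X_dvd_iff, coeff_zero_eq_eval_zero]
        have := congrArg (fun p => coeff p i) hF
        simpa using this
      obtain ⟨G1, rfl⟩ := this
      exact concl_succ 𝒰 a G1 _ (ih G1)
    · refine newton_normal 𝒰 (G.map (evalRingHom (0 : ℂ))).natDegree (a + 1) G hF ?_
      intro x
      rw [rootMultiplicity_le_iff hF]
      intro h
      have h1 := natDegree_le_of_dvd h hF
      rw [natDegree_pow, natDegree_X_sub_C] at h1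
      omega

end Newton
section Core

open Polynomial Filter Topology

/-- partial derivative in `t` -/
def dT (R : ℂ[X][X]) : ℂ[X][X] := R.sum fun j g => monomial j (derivative g)

lemma dT_coeff (R : ℂ[X][X]) (j : ℕ) : (dT R).coeff j = derivative (R.coeff j) := by
  rw [dT, Polynomial.sum, finsetSum_coeff]
  simp only [coeff_monomial]
  rw [Finset.sum_ite_eq']
  split_ifs with h
  · rfl
  · rw [notMem_support_iff.1 h]; simp

/-- `tξ` times the Jacobian -/
def jTX (R S : ℂ[X][X]) : ℂ[X][X] :=
  (C X * dT R) * (X * derivative S) - (X * derivative R) * (C X * dT S)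

lemma coeff_tT (R : ℂ[X][X]) (i j : ℕ) :
    ((C X * dT R).coeff j).coeff i = i * (R.coeff j).coeff i := by
  rw [coeff_C_mul, dT_coeff]
  cases i with
  | zero => simp
  | succ i => rw [coeff_X_mul, coeff_derivative]; push_cast; ring

lemma coeff_xX (R : ℂ[X][X]) (i j : ℕ) :
    ((X * derivative R).coeff j).coeff i = j * (R.coeff j).coeff i := by
  cases j with
  | zero => simp
  | succ j =>
    rw [coeff_X_mul, coeff_derivative]
    have : ((j : ℂ[X]) + 1) = C ((j : ℂ) + 1) := by simp
    rw [this, coeff_mul_C]; push_cast; ring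

lemma coeff_jTX (R S : ℂ[X][X]) (n m : ℕ) : ((jTX R S).coeff m).coeff n =
    ∑ a ∈ Finset.HasAntidiagonal.antidiagonal m ×ˢ Finset.HasAntidiagonal.antidiagonal n,
      ((a.2.1 : ℂ) * a.1.2 - a.1.1 * a.2.2) *
        ((R.coeff a.1.1).coeff a.2.1 * (S.coeff a.1.2).coeff a.2.2) := by
  rw [Finset.sum_product, jTX, coeff_sub, coeff_sub, coeff_mul, coeff_mul, finsetSum_coeff,
    finsetSum_coeff, ← Finset.sum_sub_distrib]
  refine Finset.sum_congr rfl fun a _ => ?_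
  have e := fun (A B : ℂ[X]) => coeff_mul A B n
  rw [e, e, ← Finset.sum_sub_distrib]
  refine Finset.sum_congr rfl fun b _ => ?_
  rw [coeff_tT, coeff_xX, coeff_tT, coeff_xX]
  ring

/-- support as a finset of exponents `(i, j)` of `t^i ξ^j` -/
def sup2 (R : ℂ[X][X]) : Finset (ℕ × ℕ) :=
  R.support.biUnion fun j => (R.coeff j).support.image fun i => (i, j)

lemma mem_sup2 (R : ℂ[X][X]) (p : ℕ × ℕ) : p ∈ sup2 R ↔ (R.coeff p.2).coeff p.1 ≠ 0 := by
  simp only [sup2, Finset.mem_biUnion, Finset.mem_image, mem_support_iff]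
  constructor
  · rintro ⟨j, _, i, hi, rfl⟩
    exact hi
  · intro h
    exact ⟨p.2, fun h0 => h (by rw [h0]; simp), p.1, h, rfl⟩

lemma jac_core (R S : ℂ[X][X]) (hR0 : ∀ j, (R.coeff j).coeff 0 = 0)
    (hRx : ∃ j, 0 < j ∧ R.coeff j ≠ 0) (hS : ∃ l, 0 < l ∧ (S.coeff l).coeff 0 ≠ 0) :
    ∃ n m, m ≠ 1 ∧ ((jTX R S).coeff m).coeff n ≠ 0 := by
  classical
  obtain ⟨j0, hj0, hj0'⟩ := hRx
  obtain ⟨l0, hl0, hl0'⟩ := hS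
  obtain ⟨⟨i, j⟩, hij, hmin⟩ := Finset.exists_max_image ((sup2 R).filter fun p => 0 < p.2)
    (fun p => toLex (-(p.1 / p.2 : ℚ), p.2)) (by
      obtain ⟨i0, hi0⟩ : ∃ i, (R.coeff j0).coeff i ≠ 0 := by
        by_contra h
        push Not at h
        exact hj0' (Polynomial.ext (by simpa using h))
      exact ⟨(i0, j0), by simp [mem_sup2, hi0, hj0]⟩)
  simp only [Finset.mem_filter, mem_sup2, Prod.Lex.le_iff, ofLex_toLex] at hij hmin
  obtain ⟨hrij, hj⟩ := hij
  have hi : 0 < i := by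
    rcases Nat.eq_zero_or_pos i with rfl | h
    · exact absurd (hR0 j) hrij
    · exact h
  have hjQ : (0 : ℚ) < j := by exact_mod_cast hj
  have hR1 : ∀ i' j', (R.coeff j').coeff i' ≠ 0 → i * j' ≤ j * i' := by
    intro i' j' h
    rcases Nat.eq_zero_or_pos j' with rfl | hj'
    · simp
    have hj'Q : (0 : ℚ) < j' := by exact_mod_cast hj'
    have h1 : (i / j : ℚ) ≤ i' / j' := by
      rcases hmin (i', j') ⟨h, hj'⟩ with h1 | h1
      · linarith
      · linarith [h1.1]
    rw [div_le_div_iff₀ hjQ hj'Q] at h1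
    have : i * j' ≤ i' * j := by exact_mod_cast h1
    linarith
  have hR2 : ∀ i' j', (R.coeff j').coeff i' ≠ 0 → i * j' = j * i' → j' ≤ j := by
    intro i' j' h he
    rcases Nat.eq_zero_or_pos j' with rfl | hj'
    · simp
    have hj'Q : (0 : ℚ) < j' := by exact_mod_cast hj'
    have h2 : (i / j : ℚ) = i' / j' := by
      rw [div_eq_div_iff hjQ.ne' hj'Q.ne']
      have : i * j' = i' * j := by rw [he]; ring
      exact_mod_cast this
    rcases hmin (i', j') ⟨h, hj'⟩ with h1 | h1
    · simp only at h1; linarith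
    · exact h1.2
  obtain ⟨⟨k, l⟩, hkl, hmax⟩ := Finset.exists_max_image (sup2 S)
    (fun p => toLex ((i * p.2 - j * p.1 : ℤ), p.2)) ⟨(0, l0), by simp [mem_sup2, hl0']⟩
  simp only [mem_sup2, Prod.Lex.le_iff, ofLex_toLex] at hkl hmax
  have hS1 : ∀ k' l', (S.coeff l').coeff k' ≠ 0 → (i * l' - j * k' : ℤ) ≤ i * l - j * k := by
    intro k' l' h
    rcases hmax (k', l') h with h1 | h1
    · exact h1.le
    · exact h1.1.le
  have hS2 : ∀ k' l', (S.coeff l').coeff k' ≠ 0 → (i * l' - j * k' : ℤ) = i * l - j * k →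
      l' ≤ l := by
    intro k' l' h he
    rcases hmax (k', l') h with h1 | h1
    · simp only at h1; linarith
    · exact h1.2
  have hpos : (0 : ℤ) < i * l - j * k := by
    have h1 := hS1 0 l0 hl0'
    have h2 : (0 : ℤ) < i * l0 := by positivity
    simp only [Nat.cast_zero, mul_zero, sub_zero] at h1
    linarith
  refine ⟨i + k, j + l, ?_, ?_⟩
  · intro h
    have h1 : j = 1 := by omega
    have h2 : l = 0 := by omega
    subst h1 h2
    simp at hpos
    omega
  · rw [coeff_jTX, Finset.sum_eq_single ((j, l), (i, k))]
    · refine mul_ne_zero ?_ (mul_ne_zero hrij hkl)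
      exact_mod_cast hpos.ne'
    · rintro ⟨⟨j1, l1⟩, ⟨i1, k1⟩⟩ ha hne
      simp only [Finset.mem_product, Finset.HasAntidiagonal.mem_antidiagonal] at ha
      obtain ⟨h1, h2⟩ := ha
      by_contra hcon
      have hr := left_ne_zero_of_mul (right_ne_zero_of_mul hcon)
      have hs := right_ne_zero_of_mul (right_ne_zero_of_mul hcon)
      simp only at hr hs
      have h3 := hR1 i1 j1 hr
      have h4 := hS1 k1 l1 hs
      have h1' : (j1 : ℤ) + l1 = j + l := by exact_mod_cast h1
      have h2' : (i1 : ℤ) + k1 = i + k := by exact_mod_cast h2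
      have h3' : (i : ℤ) * j1 ≤ j * i1 := by exact_mod_cast h3
      have hsum : (i : ℤ) * j1 - j * i1 + (i * l1 - j * k1) = i * l - j * k := by
        linear_combination (i : ℤ) * h1' - j * h2'
      have h5 : (i : ℤ) * j1 = j * i1 := by linarith
      have h6 := hS2 k1 l1 hs (by linarith)
      have h5' : i * j1 = j * i1 := by exact_mod_cast h5
      have h7 := hR2 i1 j1 hr h5'
      have hj1 : j1 = j := by omega
      subst hj1
      have hi1 : i1 = i := by
        have : j1 * i1 = j1 * i := by rw [← h5']; ring
        exact Nat.eq_of_mul_eq_mul_left hj this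
      subst hi1
      apply hne
      have : l1 = l := by omega
      have : k1 = k := by omega
      subst_vars
      rfl
    · intro h
      simp at h

/-- evaluation at a point of the plane -/
def ev (P : MvPolynomial (Fin 2) ℂ) (x y : ℂ) : ℂ :=
  MvPolynomial.eval (fun i : Fin 2 => if i = 0 then x else y) P

lemma ev_hasDerivAt (P : MvPolynomial (Fin 2) ℂ) (x y : ℂ → ℂ) (x' y' s : ℂ)
    (hx : HasDerivAt x x' s) (hy : HasDerivAt y y' s) :
    HasDerivAt (fun s => ev P (x s) (y s))
      (ev (MvPolynomial.pderiv 0 P) (x s) (y s) * x' +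
        ev (MvPolynomial.pderiv 1 P) (x s) (y s) * y') s := by
  induction P using MvPolynomial.induction_on with
  | C a => simpa [ev] using hasDerivAt_const s a
  | add p q hp hq =>
    refine ((hp.add hq).congr_deriv ?_).congr_of_eventuallyEq ?_
    · simp [ev]; ring
    · filter_upwards with s; simp [ev]
  | mul_X p n hp =>
    fin_cases n
    · refine ((hp.mul hx).congr_deriv ?_).congr_of_eventuallyEq ?_
      · simp [ev, MvPolynomial.pderiv_X]; ring
      · filter_upwards with s; simp [ev]
    · refine ((hp.mul hy).congr_deriv ?_).congr_of_eventuallyEq ?_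
      · simp [ev, MvPolynomial.pderiv_X]; ring
      · filter_upwards with s; simp [ev]

lemma E2_deriv_x (R : ℂ[X][X]) (t ξ : ℂ) :
    HasDerivAt (fun ξ => E2 R t ξ) (E2 (derivative R) t ξ) ξ := by
  have h : ∀ (G : ℂ[X][X]) ξ, E2 G t ξ = (G.map (evalRingHom t)).eval ξ := by
    intro G ξ
    rw [E2_sum G (G.natDegree + 1) (by omega), eval_eq_sum_range' (n := G.natDegree + 1)
      (lt_of_le_of_lt natDegree_map_le (by omega))]
    simp
  have h1 := (R.map (evalRingHom t)).hasDerivAt ξ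
  rw [derivative_map, ← h] at h1
  refine h1.congr_of_eventuallyEq ?_
  filter_upwards with s
  exact h R s

lemma E2_deriv_t (R : ℂ[X][X]) (t ξ : ℂ) :
    HasDerivAt (fun t => E2 R t ξ) (E2 (dT R) t ξ) t := by
  have h0 : (dT R).natDegree < R.natDegree + 1 := by
    rw [Nat.lt_succ_iff, natDegree_le_iff_coeff_eq_zero]
    intro N hN
    rw [dT_coeff, coeff_eq_zero_of_natDegree_lt hN, derivative_zero]
  rw [E2_sum (dT R) _ h0]
  have : (fun t => E2 R t ξ) =
      fun t => ∑ l ∈ Finset.range (R.natDegree + 1), (R.coeff l).eval t * ξ ^ l := by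
    funext t
    exact E2_sum R _ (by omega) t ξ
  rw [this]
  simp only [dT_coeff]
  exact HasDerivAt.fun_sum fun l _ => ((R.coeff l).hasDerivAt t).mul_const _

lemma E2_eq_zero (A : ℂ[X][X]) (h : ∀ t, t ≠ 0 → ∀ ξ, E2 A t ξ = 0) : A = 0 := by
  have h1 : ∀ t, t ≠ 0 → ∀ j, (A.coeff j).eval t = 0 := by
    intro t ht j
    have : A.map (evalRingHom t) = 0 := by
      apply Polynomial.funext
      intro ξ
      have h2 := h t ht ξ
      rw [E2_sum A (A.natDegree + 1) (by omega)] at h2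
      rw [eval_eq_sum_range' (n := A.natDegree + 1)
        (lt_of_le_of_lt natDegree_map_le (by omega))]
      simpa using h2
    have h3 := congrArg (fun p => coeff p j) this
    simpa using h3
  ext1 j
  have : X * A.coeff j = 0 := by
    apply Polynomial.funext
    intro t
    by_cases ht : t = 0
    · simp [ht]
    · simp [h1 t ht j]
  simpa using this

lemma E2_sub (G H : ℂ[X][X]) (t ξ : ℂ) : E2 (G - H) t ξ = E2 G t ξ - E2 H t ξ := by simp [E2]

lemma ev_Jac (P Q : MvPolynomial (Fin 2) ℂ) (x y : ℂ) : ev (Jac P Q) x y =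
    ev (MvPolynomial.pderiv 0 P) x y * ev (MvPolynomial.pderiv 1 Q) x y -
    ev (MvPolynomial.pderiv 1 P) x y * ev (MvPolynomial.pderiv 0 Q) x y := by
  simp [ev, Jac]

lemma jac_transform (P Q : MvPolynomial (Fin 2) ℂ) (c : ℂ)
    (hJ : Jac P Q = MvPolynomial.C c) (N : ℕ) (y : ℂ[X]) (k : ℕ) (R S : ℂ[X][X])
    (hR : ∀ t, t ≠ 0 → ∀ ξ, ev P ((t ^ N)⁻¹) ((t ^ N)⁻¹ * (y.eval t + t ^ k * ξ)) = E2 R t ξ)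
    (hS : ∀ t, t ≠ 0 → ∀ ξ, ev Q ((t ^ N)⁻¹) ((t ^ N)⁻¹ * (y.eval t + t ^ k * ξ)) = E2 S t ξ) :
    C (X ^ (2 * N)) * jTX R S = C (C (-c * N) * X ^ k) * X := by
  rw [← sub_eq_zero]
  apply E2_eq_zero
  intro t ht ξ
  have hJ' := ev_Jac P Q ((t ^ N)⁻¹) ((t ^ N)⁻¹ * (y.eval t + t ^ k * ξ))
  have hc : ev (Jac P Q) ((t ^ N)⁻¹) ((t ^ N)⁻¹ * (y.eval t + t ^ k * ξ)) = c := by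
    rw [hJ]; simp [ev]
  rw [hc] at hJ'
  set x0 := (t ^ N)⁻¹ with hx0
  set y0 := x0 * (y.eval t + t ^ k * ξ) with hy0
  have htN : t ^ N ≠ 0 := pow_ne_zero _ ht
  have hx : HasDerivAt (fun t : ℂ => (t ^ N)⁻¹) (-(N * t ^ (N - 1)) / (t ^ N) ^ 2) t :=
    (hasDerivAt_pow N t).inv htN
  have hyt : ∃ v, HasDerivAt (fun t : ℂ => (t ^ N)⁻¹ * (y.eval t + t ^ k * ξ)) v t :=
    ⟨_, hx.mul ((y.hasDerivAt t).add ((hasDerivAt_pow k t).mul_const ξ))⟩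
  obtain ⟨v, hv⟩ := hyt
  have hyx : HasDerivAt (fun ξ : ℂ => (t ^ N)⁻¹ * (y.eval t + t ^ k * ξ)) (x0 * t ^ k) ξ := by
    have := (((hasDerivAt_id ξ).const_mul (t ^ k)).const_add (y.eval t)).const_mul ((t ^ N)⁻¹)
    simpa using this
  have hnear : ∀ᶠ s in 𝓝 t, s ≠ 0 := isOpen_ne.mem_nhds ht
  have key : ∀ (P : MvPolynomial (Fin 2) ℂ) (R : ℂ[X][X]),
      (∀ t, t ≠ 0 → ∀ ξ, ev P ((t ^ N)⁻¹) ((t ^ N)⁻¹ * (y.eval t + t ^ k * ξ)) = E2 R t ξ) →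
      E2 (dT R) t ξ = ev (MvPolynomial.pderiv 0 P) x0 y0 * (-(N * t ^ (N - 1)) / (t ^ N) ^ 2) +
        ev (MvPolynomial.pderiv 1 P) x0 y0 * v ∧
      E2 (derivative R) t ξ = ev (MvPolynomial.pderiv 1 P) x0 y0 * (x0 * t ^ k) := by
    intro P R hR
    constructor
    · refine (E2_deriv_t R t ξ).unique ?_
      refine (ev_hasDerivAt P _ _ _ _ t hx hv).congr_of_eventuallyEq ?_
      filter_upwards [hnear] with s hs
      exact (hR s hs ξ).symm
    · refine (E2_deriv_x R t ξ).unique ?_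
      have := (ev_hasDerivAt P _ _ _ _ ξ (hasDerivAt_const ξ x0) hyx)
      simp only [mul_zero, zero_add] at this
      refine this.congr_of_eventuallyEq ?_
      filter_upwards with s
      exact (hR t ht s).symm
  obtain ⟨hR1, hR2⟩ := key P R hR
  obtain ⟨hS1, hS2⟩ := key Q S hS
  simp only [jTX, E2_sub, E2_mul, E2_C, E2_X, hR1, hR2, hS1, hS2, eval_X, eval_pow, eval_mul,
    eval_C]
  have hu : t * (-(N * t ^ (N - 1)) / (t ^ N) ^ 2) = - N * x0 := by
    rcases Nat.eq_zero_or_pos N with h | h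
    · simp [h]
    · have : t ^ N = t ^ (N - 1) * t := by rw [← pow_succ, Nat.sub_add_cancel h]
      have hinv : (t ^ N)⁻¹ * t ^ N = 1 := inv_mul_cancel₀ htN
      rw [hx0, mul_div_assoc', div_eq_iff (pow_ne_zero 2 htN)]
      linear_combination (N : ℂ) * this + N * t ^ N * hinv
  have hx02 : t ^ (2 * N) * x0 ^ 2 = 1 := by
    rw [hx0, mul_comm 2 N, pow_mul, ← mul_pow, mul_inv_cancel₀ htN, one_pow]
  have h1 : t * (-(N * t ^ (N - 1)) / (t ^ N) ^ 2) * (t ^ (2 * N) * (x0 * t ^ k * ξ)) =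
      - N * t ^ k * ξ := by
    rw [hu]
    linear_combination (-N * t ^ k * ξ) * hx02
  generalize (-(N * t ^ (N - 1)) / (t ^ N) ^ 2) = U at *
  linear_combination c * h1 - t * U * (t ^ (2 * N) * (x0 * t ^ k * ξ)) * hJ'

lemma exists_restrict (P : MvPolynomial (Fin 2) ℂ) : ∃ p : ℂ[X], ∀ x, p.eval x = ev P x 0 := by
  induction P using MvPolynomial.induction_on with
  | C a => exact ⟨C a, by simp [ev]⟩
  | add p q hp hq =>
    obtain ⟨p', hp⟩ := hp
    obtain ⟨q', hq⟩ := hq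
    exact ⟨p' + q', fun x => by rw [eval_add, hp, hq]; simp [ev]⟩
  | mul_X p n hp =>
    obtain ⟨p', hp⟩ := hp
    fin_cases n
    · exact ⟨p' * X, fun x => by rw [eval_mul, hp]; simp [ev]⟩
    · exact ⟨0, fun x => by simp [ev]⟩

/-- The core contradiction. -/
lemma core_contra (P Q : MvPolynomial (Fin 2) ℂ) (c : ℂ) (hc : c ≠ 0)
    (hJ : Jac P Q = MvPolynomial.C c) (N : ℕ) (hN : 0 < N) (y : ℂ[X]) (k : ℕ) (R S : ℂ[X][X])
    (hR : ∀ t, t ≠ 0 → ∀ ξ, ev P ((t ^ N)⁻¹) ((t ^ N)⁻¹ * (y.eval t + t ^ k * ξ)) = E2 R t ξ)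
    (hS : ∀ t, t ≠ 0 → ∀ ξ, ev Q ((t ^ N)⁻¹) ((t ^ N)⁻¹ * (y.eval t + t ^ k * ξ)) = E2 S t ξ)
    (hR0 : ∀ j, (R.coeff j).coeff 0 = 0) (hS0 : ∃ l, 0 < l ∧ (S.coeff l).coeff 0 ≠ 0) :
    False := by
  have hT := jac_transform P Q c hJ N y k R S hR hS
  have hcN : -c * N ≠ 0 := mul_ne_zero (neg_ne_zero.2 hc) (by exact_mod_cast hN.ne')
  by_cases hRx : ∃ j, 0 < j ∧ R.coeff j ≠ 0
  · obtain ⟨n, m, hm, hnm⟩ := jac_core R S hR0 hRx hS0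
    apply hnm
    have h1 := congrArg (fun p => (coeff p m).coeff (n + 2 * N)) hT
    simp only [coeff_C_mul, coeff_X_pow_mul] at h1
    rw [h1, coeff_X, if_neg (Ne.symm hm)]
    simp
  · push Not at hRx
    have hRC : R = C (R.coeff 0) := by
      ext1 j
      rcases Nat.eq_zero_or_pos j with rfl | hj
      · simp
      · rw [hRx j hj, coeff_C, if_neg hj.ne']
    set r := R.coeff 0 with hr
    have hr0 : r.coeff 0 = 0 := hR0 0
    obtain ⟨p, hp⟩ := exists_restrict P
    set q := expand ℂ N p with hq
    have hqr : q.reverse = X ^ q.natDegree * r := by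
      have h1 : X * q.reverse = X * (X ^ q.natDegree * r) := by
        apply Polynomial.funext
        intro t
        by_cases ht : t = 0
        · simp [ht]
        have h2 : q.eval t⁻¹ = r.eval t := by
          rw [hq, expand_eval, hp]
          have h3 := hR t ht (- y.eval t / t ^ k)
          rw [hRC, E2_C] at h3
          rw [← h3]
          have : t ^ k ≠ 0 := pow_ne_zero _ ht
          rw [mul_div_cancel₀ _ this, add_neg_cancel, mul_zero, inv_pow]
        haveI : Invertible t⁻¹ := invertibleOfNonzero (inv_ne_zero ht)
        have h4 := eval₂_reverse_mul_pow (RingHom.id ℂ) t⁻¹ q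
        rw [invOf_eq_inv, inv_inv] at h4
        change q.reverse.eval t * _ = q.eval t⁻¹ at h4
        rw [h2] at h4
        rw [eval_mul, eval_mul, eval_mul, ← h4, eval_pow, eval_X]
        have h5 : t ^ q.natDegree * t⁻¹ ^ q.natDegree = 1 := by
          rw [← mul_pow, mul_inv_cancel₀ ht, one_pow]
        linear_combination (-t * q.reverse.eval t) * h5
      exact mul_left_cancel₀ X_ne_zero h1
    have hq0 : q = 0 := by
      rw [← leadingCoeff_eq_zero, ← coeff_zero_reverse, hqr, mul_coeff_zero, hr0, mul_zero]
    have hr00 : r = 0 := by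
      rw [hq0] at hqr
      simpa using hqr.symm
    rw [hr00, C_0] at hRC
    rw [hRC] at hT
    have h1 : jTX 0 S = 0 := by simp [jTX, dT]
    rw [h1, mul_zero] at hT
    have h2 : C (C (-c * N) * X ^ k) * (X : ℂ[X][X]) ≠ 0 :=
      mul_ne_zero (C_ne_zero.2 (mul_ne_zero (C_ne_zero.2 hcN) (pow_ne_zero _ X_ne_zero))) X_ne_zero
    exact h2 hT.symm

/-- the composite `F (t^{-N}, t^{-N} (y(t) + t^k ξ))` -/
def evs (F : MvPolynomial (Fin 2) ℂ) (N : ℕ) (y : ℂ[X]) (k : ℕ) (t ξ : ℂ) : ℂ :=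
  ev F ((t ^ N)⁻¹) ((t ^ N)⁻¹ * (y.eval t + t ^ k * ξ))

lemma exists_hom (F : MvPolynomial (Fin 2) ℂ) (N : ℕ) (y : ℂ[X]) (k : ℕ) :
    ∃ (a : ℕ) (G : ℂ[X][X]), ∀ t, t ≠ 0 → ∀ ξ, E2 G t ξ = t ^ a * evs F N y k t ξ := by
  induction F using MvPolynomial.induction_on with
  | C a => exact ⟨0, C (C a), by intro t _ ξ; simp [evs, ev, E2]⟩
  | add p q hp hq =>
    obtain ⟨a, G, hG⟩ := hp
    obtain ⟨b, H, hH⟩ := hq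
    refine ⟨a + b, C (X ^ b) * G + C (X ^ a) * H, fun t ht ξ => ?_⟩
    have : evs (p + q) N y k t ξ = evs p N y k t ξ + evs q N y k t ξ := by simp [evs, ev]
    rw [E2_add, E2_mul, E2_mul, E2_C, E2_C, hG t ht, hH t ht, this, eval_pow, eval_pow, eval_X]
    ring
  | mul_X p n hp =>
    obtain ⟨a, G, hG⟩ := hp
    fin_cases n
    · refine ⟨a + N, G, fun t ht ξ => ?_⟩
      have : evs (p * MvPolynomial.X 0) N y k t ξ = evs p N y k t ξ * (t ^ N)⁻¹ := by
        simp [evs, ev]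
      have h1 : t ^ N * (t ^ N)⁻¹ = 1 := mul_inv_cancel₀ (pow_ne_zero _ ht)
      change _ = t ^ (a + N) * evs (p * MvPolynomial.X 0) N y k t ξ
      rw [hG t ht, this]
      linear_combination (-t ^ a * evs p N y k t ξ) * h1
    · refine ⟨a + N, G * (C y + C (X ^ k) * X), fun t ht ξ => ?_⟩
      have : evs (p * MvPolynomial.X 1) N y k t ξ =
          evs p N y k t ξ * ((t ^ N)⁻¹ * (y.eval t + t ^ k * ξ)) := by
        simp [evs, ev]
      have h1 : t ^ N * (t ^ N)⁻¹ = 1 := mul_inv_cancel₀ (pow_ne_zero _ ht)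
      change _ = t ^ (a + N) * evs (p * MvPolynomial.X 1) N y k t ξ
      rw [E2_mul, E2_add, E2_mul, E2_C, E2_C, E2_X, hG t ht, this, eval_pow, eval_X]
      linear_combination (-t ^ a * evs p N y k t ξ * (y.eval t + t ^ k * ξ)) * h1

lemma E2_subst (G : ℂ[X][X]) (q : ℕ) (w : ℂ[X]) (p : ℕ) :
    ∃ G' : ℂ[X][X], ∀ t ξ, E2 G' t ξ = E2 G (t ^ q) (w.eval t + t ^ p * ξ) := by
  refine ⟨∑ l ∈ Finset.range (G.natDegree + 1),
    C (expand ℂ q (G.coeff l)) * (C w + C (X ^ p) * X) ^ l, fun t ξ => ?_⟩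
  rw [E2_sum G (G.natDegree + 1) (by omega), E2, eval_finsetSum, eval_finsetSum]
  refine Finset.sum_congr rfl fun l _ => ?_
  simp only [eval_mul, eval_C, expand_eval, eval_pow, eval_add, eval_X]

lemma evs_subst (F : MvPolynomial (Fin 2) ℂ) (N : ℕ) (y : ℂ[X]) (k q : ℕ) (w : ℂ[X]) (p : ℕ)
    (t ξ : ℂ) :
    evs F (q * N) (y.comp (X ^ q) + X ^ (q * k) * w) (q * k + p) t ξ =
      evs F N y k (t ^ q) (w.eval t + t ^ p * ξ) := by
  simp only [evs, eval_add, eval_comp, eval_mul, eval_pow, eval_X, pow_mul, pow_add]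
  congr 2
  ring

lemma pigeon {α : Type*} (B : Set ℂ) (hB : B.Infinite) (T : Set α) (hT : T.Finite)
    (r : α → ℂ → Prop) (h : ∀ b ∈ B, ∃ τ ∈ T, r τ b) :
    ∃ τ ∈ T, {b | b ∈ B ∧ r τ b}.Infinite := by
  by_contra hcon
  push Not at hcon
  apply hB
  refine (hT.biUnion (t := fun τ => {b | b ∈ B ∧ r τ b}) fun τ hτ => ?_).subset ?_
  · simpa using hcon τ hτ
  · intro b hb
    obtain ⟨τ, hτ, hr⟩ := h b hb
    exact Set.mem_biUnion hτ ⟨hb, hr⟩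

/-- there is a path along which `(P, Q)` tends to `(0, b)` -/
def Sit (𝒰 : Ultrafilter ℕ) (P Q : MvPolynomial (Fin 2) ℂ) (N : ℕ) (y : ℂ[X]) (k : ℕ)
    (b : ℂ) : Prop :=
  ∃ (t ξ : ℕ → ℂ) (x : ℂ), PT 𝒰 t ∧ Tendsto ξ 𝒰 (𝓝 x) ∧
    Tendsto (fun j => evs P N y k (t j) (ξ j)) 𝒰 (𝓝 0) ∧
    Tendsto (fun j => evs Q N y k (t j) (ξ j)) 𝒰 (𝓝 b)

lemma sit_step (𝒰 : Ultrafilter ℕ) (P Q F : MvPolynomial (Fin 2) ℂ) (hF : F = P ∨ F = Q)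
    (N : ℕ) (hN : 0 < N) (y : ℂ[X]) (k : ℕ) (B : Set ℂ) (hB : B.Infinite)
    (h : ∀ b ∈ B, Sit 𝒰 P Q N y k b) :
    ∃ (N' : ℕ) (y' : ℂ[X]) (k' : ℕ) (B' : Set ℂ), 0 < N' ∧ B'.Infinite ∧
      (∀ b ∈ B', Sit 𝒰 P Q N' y' k' b) ∧
      (∃ R : ℂ[X][X], ∀ t, t ≠ 0 → ∀ ξ, evs F N' y' k' t ξ = E2 R t ξ) ∧
      ∀ F', (∃ R : ℂ[X][X], ∀ t, t ≠ 0 → ∀ ξ, evs F' N y k t ξ = E2 R t ξ) →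
        ∃ R : ℂ[X][X], ∀ t, t ≠ 0 → ∀ ξ, evs F' N' y' k' t ξ = E2 R t ξ := by
  obtain ⟨a, G, hG⟩ := exists_hom F N y k
  obtain ⟨T, hT, hadm, hlift⟩ := newton 𝒰 a G
  obtain ⟨⟨q, w, p⟩, hτ, hinf⟩ := pigeon B hB T hT
    (fun τ b => Sit 𝒰 P Q (τ.1 * N) (y.comp (X ^ τ.1) + X ^ (τ.1 * k) * τ.2.1)
      (τ.1 * k + τ.2.2) b) (by
    intro b hb
    obtain ⟨t, ξ, x, ht, hξ, hP, hQ⟩ := h b hb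
    have hL : ∃ L, Tendsto (fun j => E2 G (t j) (ξ j) / t j ^ a) 𝒰 (𝓝 L) := by
      have h1 : ∃ L, Tendsto (fun j => evs F N y k (t j) (ξ j)) 𝒰 (𝓝 L) := by
        rcases hF with rfl | rfl
        · exact ⟨_, hP⟩
        · exact ⟨_, hQ⟩
      obtain ⟨L, hL⟩ := h1
      refine ⟨L, hL.congr' ?_⟩
      filter_upwards [ht.2] with j hj
      rw [hG _ hj, mul_div_cancel_left₀ _ (pow_ne_zero _ hj)]
    obtain ⟨L, hL⟩ := hL
    obtain ⟨τ, hτ, t', ξ', ht', ⟨x', hx'⟩, hev⟩ := hlift t ξ x L ht hξ (Set.mem_univ _) hL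
    refine ⟨τ, hτ, t', ξ', x', ht', hx', hP.congr' ?_, hQ.congr' ?_⟩
    · filter_upwards [hev] with j hj
      rw [evs_subst, hj.1, hj.2]
    · filter_upwards [hev] with j hj
      rw [evs_subst, hj.1, hj.2])
  obtain ⟨hq, G', hG'⟩ := hadm _ hτ
  simp only at hq hG' hinf
  refine ⟨q * N, _, _, _, Nat.mul_pos hq hN, hinf, fun b hb => hb.2, ⟨G', ?_⟩, ?_⟩
  · intro t ht ξ
    have h1 := hG' t ξ
    have htq : t ^ q ≠ 0 := pow_ne_zero _ ht
    rw [hG _ htq, pow_mul] at h1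
    rw [evs_subst]
    exact mul_left_cancel₀ (pow_ne_zero _ htq) h1
  · rintro F' ⟨R, hR⟩
    obtain ⟨R', hR'⟩ := E2_subst R q w p
    refine ⟨R', fun t ht ξ => ?_⟩
    rw [evs_subst, hR', hR _ (pow_ne_zero _ ht)]

lemma part2_aux (𝒰 : Ultrafilter ℕ) (P Q : MvPolynomial (Fin 2) ℂ) (c : ℂ) (hc : c ≠ 0)
    (hJ : Jac P Q = MvPolynomial.C c) (B : Set ℂ) (hB : B.Infinite)
    (h : ∀ b ∈ B, Sit 𝒰 P Q 1 0 0 b) : False := by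
  obtain ⟨N1, y1, k1, B1, hN1, hB1, h1, hR1, -⟩ :=
    sit_step 𝒰 P Q P (Or.inl rfl) 1 one_pos 0 0 B hB h
  obtain ⟨N, y, k, B2, hN, hB2, h2, ⟨S, hS⟩, hR2⟩ :=
    sit_step 𝒰 P Q Q (Or.inr rfl) N1 hN1 y1 k1 B1 hB1 h1
  obtain ⟨R, hR⟩ := hR2 P hR1
  have hlim : ∀ b ∈ B2, ∃ x, E2 R 0 x = 0 ∧ E2 S 0 x = b := by
    intro b hb
    obtain ⟨t, ξ, x, ht, hξ, hP, hQ⟩ := h2 b hb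
    refine ⟨x, ?_, ?_⟩
    · refine tendsto_nhds_unique (E2_tendsto 𝒰 R t ξ 0 x ht.1 hξ) (hP.congr' ?_)
      filter_upwards [ht.2] with j hj
      exact hR _ hj _
    · refine tendsto_nhds_unique (E2_tendsto 𝒰 S t ξ 0 x ht.1 hξ) (hQ.congr' ?_)
      filter_upwards [ht.2] with j hj
      exact hS _ hj _
  refine core_contra P Q c hc hJ N hN y k R S hR hS ?_ ?_
  · have hmap : R.map (evalRingHom (0 : ℂ)) = 0 := by
      by_contra hne
      apply hB2
      refine ((finite_setOfPred_isRoot hne).image (E2 S 0)).subset ?_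
      intro b hb
      obtain ⟨x, hx1, hx2⟩ := hlim b hb
      refine ⟨x, ?_, hx2⟩
      rw [E2_zero_left] at hx1
      exact hx1
    intro j
    have := congrArg (fun p => coeff p j) hmap
    rw [coeff_zero_eq_eval_zero]
    simpa using this
  · by_contra hcon
    push Not at hcon
    apply hB2
    refine (Set.finite_singleton ((S.coeff 0).eval 0)).subset ?_
    intro b hb
    obtain ⟨x, hx1, hx2⟩ := hlim b hb
    rw [Set.mem_singleton_iff, ← hx2, E2_sum S (S.natDegree + 1) (by omega),
      Finset.sum_eq_single 0]
    · simp
    · intro l _ hl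
      rw [← coeff_zero_eq_eval_zero, hcon l (by omega), zero_mul]
    · simp

lemma part2 (𝒰 : Ultrafilter ℕ) (P Q : MvPolynomial (Fin 2) ℂ) (c : ℂ) (hc : c ≠ 0)
    (hJ : Jac P Q = MvPolynomial.C c) (B : Set ℂ) (hB : B.Infinite)
    (h : ∀ b ∈ B, ∃ x y : ℕ → ℂ, Tendsto (fun j => ‖x j‖) 𝒰 atTop ∧
      (∀ᶠ j in 𝒰, ‖y j‖ ≤ ‖x j‖) ∧ Tendsto (fun j => ev P (x j) (y j)) 𝒰 (𝓝 0) ∧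
      Tendsto (fun j => ev Q (x j) (y j)) 𝒰 (𝓝 b)) : False := by
  refine part2_aux 𝒰 P Q c hc hJ B hB fun b hb => ?_
  obtain ⟨x, y, hx, hyx, hP, hQ⟩ := h b hb
  have hne : ∀ᶠ j in 𝒰, x j ≠ 0 := by
    filter_upwards [hx.eventually_gt_atTop 0] with j hj
    exact norm_pos_iff.1 hj
  have hev : ∀ F : MvPolynomial (Fin 2) ℂ, ∀ᶠ j in 𝒰,
      ev F (x j) (y j) = evs F 1 0 0 ((x j)⁻¹) (y j / x j) := by
    intro F
    filter_upwards [hne] with j hj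
    simp only [evs, pow_one, inv_inv, eval_zero, pow_zero, one_mul, zero_add]
    rw [mul_div_cancel₀ _ hj]
  rcases ultra_lim 𝒰 (fun j => y j / x j) with ⟨z, hz⟩ | hz
  · refine ⟨fun j => (x j)⁻¹, fun j => y j / x j, z, ⟨?_, ?_⟩, hz, hP.congr' (hev P),
      hQ.congr' (hev Q)⟩
    · rw [tendsto_zero_iff_norm_tendsto_zero]
      simp only [norm_inv]
      exact hx.inv_tendsto_atTop
    · filter_upwards [hne] with j hj
      exact inv_ne_zero hj
  · exfalso
    obtain ⟨j, h1, h2, h3⟩ := (hne.and (hyx.and (hz.eventually_gt_atTop 1))).exists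
    rw [norm_div, lt_div_iff₀ (norm_pos_iff.2 h1)] at h3
    linarith

lemma ev_swap (P : MvPolynomial (Fin 2) ℂ) (x y : ℂ) :
    ev (MvPolynomial.rename (Equiv.swap (0 : Fin 2) 1) P) x y = ev P y x := by
  rw [ev, ev, MvPolynomial.eval_rename]
  congr 1
  congr 1
  funext i
  fin_cases i <;> simp

lemma Jac_swap (P Q : MvPolynomial (Fin 2) ℂ) (c : ℂ) (hJ : Jac P Q = MvPolynomial.C c) :
    Jac (MvPolynomial.rename (Equiv.swap (0 : Fin 2) 1) P)
      (MvPolynomial.rename (Equiv.swap (0 : Fin 2) 1) Q) = MvPolynomial.C (-c) := by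
  have h0 : ∀ F : MvPolynomial (Fin 2) ℂ,
      MvPolynomial.pderiv 0 (MvPolynomial.rename (Equiv.swap (0 : Fin 2) 1) F) =
      MvPolynomial.rename (Equiv.swap (0 : Fin 2) 1) (MvPolynomial.pderiv 1 F) := by
    intro F
    have := MvPolynomial.pderiv_rename (R := ℂ) (Equiv.swap (0 : Fin 2) 1).injective 1 F
    simpa using this
  have h1 : ∀ F : MvPolynomial (Fin 2) ℂ,
      MvPolynomial.pderiv 1 (MvPolynomial.rename (Equiv.swap (0 : Fin 2) 1) F) =
      MvPolynomial.rename (Equiv.swap (0 : Fin 2) 1) (MvPolynomial.pderiv 0 F) := by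
    intro F
    have := MvPolynomial.pderiv_rename (R := ℂ) (Equiv.swap (0 : Fin 2) 1).injective 0 F
    simpa using this
  have h2 := congrArg (MvPolynomial.rename (Equiv.swap (0 : Fin 2) 1)) hJ
  simp only [Jac, map_sub, map_mul, MvPolynomial.rename_C] at h2
  simp only [Jac, h0, h1, map_neg, ← h2]
  ring

lemma line_case (P Q : MvPolynomial (Fin 2) ℂ) (c : ℂ) (hc : c ≠ 0)
    (hJ : Jac P Q = MvPolynomial.C c) (r : ℂ) (h : ∀ b : ℂ, (r, b) ∈ nonProperSet P Q) :
    False := by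
  let 𝒰 : Ultrafilter ℕ := hyperfilter ℕ
  have h𝒰 : (𝒰 : Filter ℕ) ≤ atTop := Nat.hyperfilter_le_atTop
  set P' := P - MvPolynomial.C r with hP'
  have hJ' : Jac P' Q = MvPolynomial.C c := by
    rw [← hJ, hP']; simp [Jac]
  have key : ∀ b ∈ (Set.univ : Set ℂ), ∃ s ∈ (Set.univ : Set Bool), ∃ x y : ℕ → ℂ,
      Tendsto (fun j => ‖x j‖) 𝒰 atTop ∧
      (∀ᶠ j in 𝒰, ‖y j‖ ≤ ‖x j‖) ∧
      Tendsto (fun j => bif s then ev P' (x j) (y j) else ev P' (y j) (x j)) 𝒰 (𝓝 0) ∧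
      Tendsto (fun j => bif s then ev Q (x j) (y j) else ev Q (y j) (x j)) 𝒰 (𝓝 b) := by
    intro b _
    obtain ⟨z, hz, hf⟩ := h b
    have hz' := hz.mono_left h𝒰
    have hf' := hf.mono_left h𝒰
    have hQ : Tendsto (fun j => ev Q (z j).1 (z j).2) 𝒰 (𝓝 b) :=
      (continuous_snd.tendsto (r, b)).comp hf'
    have hP0 : Tendsto (fun j => ev P (z j).1 (z j).2) 𝒰 (𝓝 r) :=
      (continuous_fst.tendsto (r, b)).comp hf'
    have hP : Tendsto (fun j => ev P' (z j).1 (z j).2) 𝒰 (𝓝 0) := by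
      have := hP0.sub_const r
      rw [sub_self] at this
      refine this.congr fun j => ?_
      simp [hP', ev]
    by_cases hle : ∀ᶠ j in 𝒰, ‖(z j).2‖ ≤ ‖(z j).1‖
    · refine ⟨true, trivial, fun j => (z j).1, fun j => (z j).2, ?_, hle, hP, hQ⟩
      refine hz'.congr' ?_
      filter_upwards [hle] with j hj
      rw [Prod.norm_def, max_eq_left hj]
    · rw [← Ultrafilter.eventually_not] at hle
      have hle' : ∀ᶠ j in 𝒰, ‖(z j).1‖ ≤ ‖(z j).2‖ := by
        filter_upwards [hle] with j hj
        exact (not_le.1 hj).le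
      refine ⟨false, trivial, fun j => (z j).2, fun j => (z j).1, ?_, hle', hP, hQ⟩
      refine hz'.congr' ?_
      filter_upwards [hle'] with j hj
      rw [Prod.norm_def, max_eq_right hj]
  obtain ⟨s, -, hinf⟩ := pigeon Set.univ Set.infinite_univ Set.univ Set.finite_univ _ key
  cases s with
  | true =>
    refine part2 𝒰 P' Q c hc hJ' _ hinf fun b hb => ?_
    obtain ⟨-, x, y, h1, h2, h3, h4⟩ := hb
    exact ⟨x, y, h1, h2, h3, h4⟩
  | false =>
    refine part2 𝒰 _ _ (-c) (neg_ne_zero.2 hc) (Jac_swap P' Q c hJ') _ hinf fun b hb => ?_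
    obtain ⟨-, x, y, h1, h2, h3, h4⟩ := hb
    refine ⟨x, y, h1, h2, ?_, ?_⟩
    · simpa only [ev_swap, cond_false] using h3
    · simpa only [ev_swap, cond_false] using h4

lemma pderiv_aeval (i : Fin 2) (P : MvPolynomial (Fin 2) ℂ) (c : ℂ[X]) :
    MvPolynomial.pderiv i (aeval P c) = aeval P (derivative c) * MvPolynomial.pderiv i P :=
  by
  induction c using Polynomial.induction_on' with
  | add p q hp hq => simp only [map_add, hp, hq]; ring
  | monomial n a =>
    rw [derivative_monomial, aeval_monomial, aeval_monomial]
    simp [MvPolynomial.algebraMap_eq, Derivation.leibniz_pow]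
    ring

lemma ev_aeval (P : MvPolynomial (Fin 2) ℂ) (c : ℂ[X]) (x y : ℂ) :
    ev (aeval P c) x y = c.eval (ev P x y) := by
  induction c using Polynomial.induction_on' with
  | add p q hp hq =>
    rw [map_add, eval_add, ← hp, ← hq]; simp [ev]
  | monomial n a => simp [ev, aeval_monomial, MvPolynomial.algebraMap_eq]

lemma main_induction (n : ℕ) : ∀ (P Q : MvPolynomial (Fin 2) ℂ) (γ₁ γ₂ : ℂ[X]) (c : ℂ),
    γ₁.natDegree ≤ n → c ≠ 0 → Jac P Q = MvPolynomial.C c →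
    (X : ℂ[X]) ∈ Algebra.adjoin ℂ ({γ₁, γ₂} : Set ℂ[X]) →
    Set.range (curveMap γ₁ γ₂) ⊆ nonProperSet P Q → False := by
  induction n using Nat.strong_induction_on with
  | _ n ih =>
  intro P Q γ₁ γ₂ c hn hc hJ hX hsub
  rcases Nat.eq_zero_or_pos γ₁.natDegree with h0 | hpos
  · rw [natDegree_eq_zero] at h0
    obtain ⟨r, rfl⟩ := h0
    refine line_case P Q c hc hJ r fun b => ?_
    have hdeg : (γ₂ - C b).degree ≠ 0 := by
      intro hd
      obtain ⟨e, he⟩ : ∃ e, γ₂ = C e := by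
        have := eq_C_of_degree_eq_zero hd
        exact ⟨(γ₂ - C b).coeff 0 + b, by rw [C_add, ← this]; ring⟩
      rw [he] at hX
      have hle : Algebra.adjoin ℂ ({C r, C e} : Set ℂ[X]) ≤ ⊥ := by
        rw [Algebra.adjoin_le_iff]
        rintro g (rfl | rfl)
        · exact ⟨r, rfl⟩
        · exact ⟨e, rfl⟩
      obtain ⟨v, hv⟩ := hle hX
      have := congrArg natDegree hv
      change (C v).natDegree = _ at this
      simp at this
    obtain ⟨s, hs⟩ := IsAlgClosed.exists_root _ hdeg
    have hs' : γ₂.eval s = b := by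
      simpa [IsRoot, sub_eq_zero] using hs
    exact hsub ⟨s, by simp [curveMap, hs']⟩
  · obtain ⟨f, hf⟩ := ams_lemma γ₁ γ₂ hpos hX
    refine ih (γ₂ - f.comp γ₁).natDegree (by omega) (Q - aeval P f) P (γ₂ - f.comp γ₁) γ₁ (-c)
      le_rfl (neg_ne_zero.2 hc) ?_ ?_ ?_
    · rw [map_neg, ← hJ]
      simp only [Jac, map_sub, pderiv_aeval]
      ring
    · refine Algebra.adjoin_le (S := Algebra.adjoin ℂ ({γ₂ - f.comp γ₁, γ₁} : Set ℂ[X])) ?_ hX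
      have h1 : γ₁ ∈ Algebra.adjoin ℂ ({γ₂ - f.comp γ₁, γ₁} : Set ℂ[X]) :=
        Algebra.subset_adjoin (by simp)
      have h2 : γ₂ - f.comp γ₁ ∈ Algebra.adjoin ℂ ({γ₂ - f.comp γ₁, γ₁} : Set ℂ[X]) :=
        Algebra.subset_adjoin (by simp)
      rintro g (rfl | rfl)
      · exact h1
      · have h3 : f.comp γ₁ ∈ Algebra.adjoin ℂ ({g - f.comp γ₁, γ₁} : Set ℂ[X]) := by
          have : f.comp γ₁ = aeval γ₁ f := rfl
          rw [this]
          exact Algebra.adjoin_mono (Set.singleton_subset_iff.2 (by simp))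
            (aeval_mem_adjoin_singleton ℂ γ₁)
        have := add_mem h2 h3
        rwa [sub_add_cancel] at this
    · rintro _ ⟨s, rfl⟩
      obtain ⟨z, hz, hlim⟩ := hsub ⟨s, rfl⟩
      refine ⟨z, hz, ?_⟩
      have hP : Tendsto (fun j => ev P (z j).1 (z j).2) atTop (𝓝 (γ₁.eval s)) :=
        (continuous_fst.tendsto (curveMap γ₁ γ₂ s)).comp hlim
      have hQ : Tendsto (fun j => ev Q (z j).1 (z j).2) atTop (𝓝 (γ₂.eval s)) :=
        (continuous_snd.tendsto (curveMap γ₁ γ₂ s)).comp hlim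
      have h1 : Tendsto (fun j => ev (Q - aeval P f) (z j).1 (z j).2) atTop
          (𝓝 ((γ₂ - f.comp γ₁).eval s)) := by
        rw [eval_sub, eval_comp]
        refine (hQ.sub (poly_tendsto atTop f _ _ hP)).congr fun j => ?_
        rw [← ev_aeval]
        simp [ev]
      exact h1.prodMk_nhds hP

lemma const_of_no_zero (J : MvPolynomial (Fin 2) ℂ) (h : ∀ x y, ev J x y ≠ 0) :
    ∃ c, c ≠ 0 ∧ J = MvPolynomial.C c := by
  have hu : IsUnit J := by
    rw [← Ideal.span_singleton_eq_top]
    have h1 := MvPolynomial.vanishingIdeal_zeroLocus_eq_radical (K := ℂ)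
      (Ideal.span ({J} : Set (MvPolynomial (Fin 2) ℂ)))
    rw [← Ideal.radical_eq_top, ← h1]
    rw [Ideal.eq_top_iff_one]
    intro x hx
    exfalso
    have h2 := hx J (Ideal.mem_span_singleton_self J)
    apply h (x 0) (x 1)
    have h3 : (fun i : Fin 2 => if i = 0 then x 0 else x 1) = x := by
      funext i
      fin_cases i <;> simp
    rw [ev, h3]
    rwa [MvPolynomial.aeval_eq_eval] at h2
  rw [MvPolynomial.isUnit_iff_eq_C_of_isReduced] at hu
  obtain ⟨c, hc, rfl⟩ := hu
  exact ⟨c, hc.ne_zero, rfl⟩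
end Core

theorem stmt5 (P Q : MvPolynomial (Fin 2) ℂ)
    (hnonconst : ¬ (P.totalDegree = 0 ∧ Q.totalDegree = 0))
    (L : Set (ℂ × ℂ)) (γ₁ γ₂ : Polynomial ℂ) (δ : MvPolynomial (Fin 2) ℂ)
    (hretr : ∀ s : ℂ,
      MvPolynomial.eval (fun i : Fin 2 => if i = 0 then γ₁.eval s else γ₂.eval s) δ = s)
    (hL : L = Set.range (curveMap γ₁ γ₂))
    (hLsub : L ⊆ nonProperSet P Q)
    (hcomp : ∀ η₁ η₂ : Polynomial ℂ, ¬ (η₁.natDegree = 0 ∧ η₂.natDegree = 0) →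
      Set.range (curveMap η₁ η₂) ⊆ nonProperSet P Q →
      Set.range (curveMap η₁ η₂) ⊆ L ∨ (Set.range (curveMap η₁ η₂) ∩ L).Finite) :
    ∃ z : ℂ × ℂ,
      MvPolynomial.eval (fun i : Fin 2 => if i = 0 then z.1 else z.2) (Jac P Q) = 0 := by
  by_contra hcon
  push Not at hcon
  obtain ⟨c, hc, hJ⟩ := const_of_no_zero (Jac P Q) (fun x y => hcon (x, y))
  subst hL
  refine main_induction _ P Q γ₁ γ₂ c le_rfl hc hJ ?_ hLsub
  have hX : MvPolynomial.aeval (fun i : Fin 2 => if i = 0 then γ₁ else γ₂) δ =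
      (Polynomial.X : Polynomial ℂ) := by
    apply Polynomial.funext
    intro s
    rw [Polynomial.eval_X]
    refine Eq.trans ?_ (hretr s)
    clear hretr
    induction δ using MvPolynomial.induction_on with
    | C a => simp
    | add p q hp hq => rw [map_add, Polynomial.eval_add, hp, hq, map_add]
    | mul_X p n hp =>
      rw [map_mul, Polynomial.eval_mul, hp, map_mul]
      fin_cases n <;> simp
  have h1 := (MvPolynomial.aeval (fun i : Fin 2 => if i = 0 then γ₁ else γ₂)
    : MvPolynomial (Fin 2) ℂ →ₐ[ℂ] Polynomial ℂ).mem_range_self δ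
  rw [hX, MvPolynomial.aeval_range] at h1
  refine Algebra.adjoin_mono ?_ h1
  rintro _ ⟨i, rfl⟩
  fin_cases i <;> simp

end
end

section
/- Let a and b be positive integers and let p, q ∈ ℂ[ξ] be nonzero polynomials satisfying a·p·q′ = b·p′·q. Then there exists C ∈ ℂ∖{0} such that p^b = C·q^a. Moreover, if deg p > 0, then p and q have a common zero in ℂ. -/
theorem aux_pow_der (n : ℕ) (hn : 0 < n) (p : Polynomial ℂ) :
    Polynomial.derivative (p ^ n) * p = Polynomial.C (n : ℂ) * p ^ n * Polynomial.derivative p := by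
  obtain ⟨m, rfl⟩ : ∃ m, n = m + 1 := ⟨n - 1, by omega⟩
  rw [Polynomial.derivative_pow]
  simp only [Nat.add_sub_cancel]
  ring

theorem aux_wr (P Q : Polynomial ℂ) (hP : P ≠ 0) (hQ : Q ≠ 0)
    (h : Polynomial.derivative P * Q = P * Polynomial.derivative Q) :
    ∃ C : ℂ, C ≠ 0 ∧ P = Polynomial.C C * Q := by
  classical
  have hg : GCDMonoid.gcd P Q ≠ 0 := fun h0 => hP ((gcd_eq_zero_iff P Q).mp h0).1
  have hc := isCoprime_div_gcd_div_gcd (p := P) (q := Q) hQ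
  obtain ⟨u, hu⟩ := gcd_dvd_left P Q
  obtain ⟨v, hv⟩ := gcd_dvd_right P Q
  generalize GCDMonoid.gcd P Q = g at *
  subst hu hv
  rw [mul_div_cancel_left₀ _ hg, mul_div_cancel_left₀ _ hg] at hc
  have hw : Polynomial.wronskian u v = 0 := by
    apply mul_left_cancel₀ (mul_ne_zero hg hg)
    simp only [Polynomial.derivative_mul] at h
    rw [Polynomial.wronskian]
    linear_combination -h
  obtain ⟨h1, h2⟩ := hc.wronskian_eq_zero_iff.mp hw
  obtain ⟨c, rfl⟩ := Polynomial.natDegree_eq_zero.mp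
    (Polynomial.natDegree_eq_zero_of_derivative_eq_zero h1)
  obtain ⟨d, rfl⟩ := Polynomial.natDegree_eq_zero.mp
    (Polynomial.natDegree_eq_zero_of_derivative_eq_zero h2)
  have hc0 : c ≠ 0 := by rintro rfl; simp at hP
  have hd0 : d ≠ 0 := by rintro rfl; simp at hQ
  refine ⟨c / d, div_ne_zero hc0 hd0, ?_⟩
  have : Polynomial.C c = Polynomial.C (c / d) * Polynomial.C d := by
    rw [← Polynomial.C_mul, div_mul_cancel₀ _ hd0]
  rw [this]
  ring

/-- If `a, b` are positive integers and `p, q ∈ ℂ[ξ]` are nonzero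
polynomials with `a p q' = b p' q`, then `p^b = C q^a` for some `C ∈ ℂ*`; moreover if
`deg p > 0` then `p` and `q` have a common zero. -/
theorem stmt10 (a b : ℕ) (ha : 0 < a) (hb : 0 < b)
    (p q : Polynomial ℂ) (hp : p ≠ 0) (hq : q ≠ 0)
    (h : Polynomial.C (a : ℂ) * (p * Polynomial.derivative q)
        = Polynomial.C (b : ℂ) * (Polynomial.derivative p * q)) :
    (∃ C : ℂ, C ≠ 0 ∧ p ^ b = Polynomial.C C * q ^ a) ∧
    (0 < p.natDegree → ∃ z : ℂ, p.IsRoot z ∧ q.IsRoot z) := by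
  have key : ∃ C : ℂ, C ≠ 0 ∧ p ^ b = Polynomial.C C * q ^ a := by
    apply aux_wr _ _ (pow_ne_zero _ hp) (pow_ne_zero _ hq)
    apply mul_right_cancel₀ (mul_ne_zero hp hq)
    have h1 := aux_pow_der b hb p
    have h2 := aux_pow_der a ha q
    linear_combination (q ^ a * q) * h1 - (p ^ b * p) * h2 - p ^ b * q ^ a * h
  refine ⟨key, fun hd => ?_⟩
  obtain ⟨C, hC, hk⟩ := key
  obtain ⟨z, hz⟩ := IsAlgClosed.exists_root p
    (Polynomial.degree_ne_of_natDegree_ne (n := 0) hd.ne')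
  refine ⟨z, hz, ?_⟩
  have := congrArg (Polynomial.eval z) hk
  rw [Polynomial.IsRoot.def] at hz ⊢
  simp only [Polynomial.eval_pow, Polynomial.eval_mul, Polynomial.eval_C, hz,
    zero_pow hb.ne'] at this
  rcases mul_eq_zero.mp this.symm with h | h
  · exact absurd h hC
  · exact eq_zero_of_pow_eq_zero h
end
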